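/- There exist absolute constants c⋆ ∈ (0,1) and C⋆ > 1 such that the following holds. Let p ≥ 5 be a prime, K ≥ 1 a real number, and μ : SL₂(F_p) → [0,∞) a function with ∑_{g} μ(g) = 1 and μ(g) = μ(g^{−1}) for all g, satisfying: (i) ∑_{x ∈ gΓ} μ(x) ≤ K^{−1} for every proper subgroup Γ of SL₂(F_p) and every g ∈ SL₂(F_p); and (ii) μ(g) ≤ K^{−1} for every g. Then for every positive integer k with k ≤ K^{c⋆}: 0 ≤ ∑_{g} (μ^{(2^k)}(g))² − |SL₂(F_p)|^{−1} ≤ C⋆^k · K^{−c⋆·k}. -/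

import Mathlib

open Finset Pointwise

/-- Convolution of two functions on a finite group:
`(μ∗ν)(x) = ∑_y μ(y)·ν(y⁻¹x)`. -/
noncomputable def convG {G : Type*} [Group G] [Fintype G] (μ ν : G → ℝ) : G → ℝ :=
  fun x => ∑ y, μ y * ν (y⁻¹ * x)

/-- `iterConv μ n` is the `(n+1)`-fold self-convolution `μ^{(n+1)}` of `μ`,
so `iterConv μ 0 = μ^{(1)} = μ`. -/
noncomputable def iterConv {G : Type*} [Group G] [Fintype G] (μ : G → ℝ) : ℕ → G → ℝ
  | 0 => μ
  | n + 1 => convG (iterConv μ n) μ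

/-!
Bourgain–Gamburd flattening. Let `ν` be a symmetric probability on `SL₂(F)` that gives little mass
to cosets of proper subgroups. If the fourfold convolution of `ν` has `ℓ²` norm comparable to that
of `ν`, then `ν ∗ ν` has large energy, so by Balog–Szemerédi–Gowers it charges a translate of an
approximate subgroup. Non-concentration forces this approximate subgroup to be large and to
generate, and the product theorem for `SL₂` then shows that it nearly fills the group. Hence two
convolutions divide the `ℓ²` norm by a power of `K` until it is within a power of `K` of its
minimum `|SL₂(F)|^{-1/2}`. From there on, each convolution divides the distance to the uniform
measure by a power of `K`, because the eigenspaces of convolution carry nontrivial representations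
of `SL₂(F)`, whose dimensions are at least `(|F| - 1) / 2`.
-/

section FiniteSums

variable {α : Type*} [Fintype α] {f : α → ℝ}

/-- The squared `ℓ²` norm of `f` for the counting measure. For a probability `μ` it is the chance
that two independent samples collide, and it is at least `|α|⁻¹`. -/
def l2Sq (f : α → ℝ) : ℝ :=
  ∑ x, f x ^ 2

/-- The mass that `f` gives to `S`. -/
noncomputable def massOn (f : α → ℝ) (S : Set α) : ℝ :=
  ∑ x, S.indicator f x

theorem massOn_singleton (f : α → ℝ) (x : α) : massOn f {x} = f x := by
  classical
  simp [massOn, Set.indicator_apply]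

theorem massOn_mono (hf : ∀ x, 0 ≤ f x) {S T : Set α} (h : S ⊆ T) : massOn f S ≤ massOn f T :=
  sum_le_sum fun x _ ↦ Set.indicator_le_indicator_of_subset h hf x

variable [Nonempty α]

theorem l2Sq_sub_uniform (hf : ∑ x, f x = 1) :
    l2Sq (fun x ↦ f x - (Fintype.card α : ℝ)⁻¹) = l2Sq f - (Fintype.card α : ℝ)⁻¹ := by
  have hcard : (Fintype.card α : ℝ) ≠ 0 := Nat.cast_ne_zero.2 Fintype.card_ne_zero
  simp only [l2Sq, sub_sq, sum_add_distrib, sum_sub_distrib, ← sum_mul, ← mul_sum, hf, sum_const,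
    card_univ, nsmul_eq_mul]
  field

theorem inv_card_le_l2Sq (hf : ∑ x, f x = 1) : (Fintype.card α : ℝ)⁻¹ ≤ l2Sq f := by
  rw [← sub_nonneg, ← l2Sq_sub_uniform hf]
  exact sum_nonneg fun _ _ ↦ sq_nonneg _

theorem sum_sub_uniform (hf : ∑ x, f x = 1) : ∑ x, (f x - (Fintype.card α : ℝ)⁻¹) = 0 := by
  simp [sum_sub_distrib, hf]

end FiniteSums

section Convolution

variable {G : Type*} [Group G] [Fintype G] {f g μ : G → ℝ}

/-- `μ` is the density of a probability measure on `G` that is invariant under inversion. -/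
structure IsSymmProb (μ : G → ℝ) : Prop where
  nonneg : ∀ x, 0 ≤ μ x
  sum_eq_one : ∑ x, μ x = 1
  apply_inv : ∀ x, μ x⁻¹ = μ x

theorem sum_apply_mul_left (f : G → ℝ) (y : G) : ∑ x, f (y * x) = ∑ x, f x :=
  Equiv.sum_comp (Equiv.mulLeft y) f

theorem sum_apply_mul_right (f : G → ℝ) (y : G) : ∑ x, f (x * y) = ∑ x, f x :=
  Equiv.sum_comp (Equiv.mulRight y) f

theorem sum_apply_inv_mul (f : G → ℝ) (x : G) : ∑ y, f (y⁻¹ * x) = ∑ y, f y :=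
  Equiv.sum_comp ((Equiv.inv G).trans (Equiv.mulRight x)) f

theorem convG_assoc (f g h : G → ℝ) : convG (convG f g) h = convG f (convG g h) := by
  funext x
  simp only [convG, sum_mul, mul_sum]
  rw [sum_comm]
  refine sum_congr rfl fun y _ ↦ Fintype.sum_equiv (Equiv.mulLeft y⁻¹) _ _ fun z ↦ ?_
  simp [mul_assoc]

theorem convG_apply_inv (hf : ∀ x, f x⁻¹ = f x) (hg : ∀ x, g x⁻¹ = g x) (x : G) :
    convG f g x⁻¹ = convG g f x := by
  refine Fintype.sum_equiv (Equiv.mulLeft x) _ _ fun y ↦ ?_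
  rw [Equiv.coe_mulLeft, ← hg (x * y), ← hf y, mul_comm]
  simp [mul_assoc]

theorem convG_nonneg (hf : ∀ x, 0 ≤ f x) (hg : ∀ x, 0 ≤ g x) (x : G) : 0 ≤ convG f g x :=
  sum_nonneg fun _ _ ↦ mul_nonneg (hf _) (hg _)

theorem sum_convG (f g : G → ℝ) : ∑ x, convG f g x = (∑ x, f x) * ∑ x, g x := by
  simp only [convG]
  rw [sum_comm, sum_mul]
  exact sum_congr rfl fun y _ ↦ by rw [← mul_sum, sum_apply_mul_left]

theorem convG_self_apply_one (hf : ∀ x, f x⁻¹ = f x) : convG f f 1 = l2Sq f := by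
  simp only [convG, l2Sq, mul_one, hf, sq]

theorem convG_self_le_l2Sq (f : G → ℝ) (x : G) : convG f f x ≤ l2Sq f := by
  have cauchy_schwarz := sum_mul_sq_le_sq_mul_sq univ f (fun y ↦ f (y⁻¹ * x))
  rw [sum_apply_inv_mul (fun y ↦ f y ^ 2) x, ← sq] at cauchy_schwarz
  exact le_of_sq_le_sq cauchy_schwarz (sum_nonneg fun _ _ ↦ sq_nonneg _)

theorem l2Sq_convG_le (f : G → ℝ) (hg : ∀ x, 0 ≤ g x) (hg1 : ∑ x, g x = 1) :
    l2Sq (convG f g) ≤ l2Sq f := by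
  have jensen (x : G) : convG f g x ^ 2 ≤ convG (fun y ↦ f y ^ 2) g x := by
    simpa only [convG, mul_comm] using Real.pow_arith_mean_le_arith_mean_pow_of_even univ
      (fun y ↦ g (y⁻¹ * x)) f (fun y _ ↦ hg _) (by rw [sum_apply_inv_mul, hg1]) even_two
  calc l2Sq (convG f g) ≤ ∑ x, convG (fun y ↦ f y ^ 2) g x := sum_le_sum fun x _ ↦ jensen x
    _ = l2Sq f := by rw [sum_convG, hg1, mul_one, l2Sq]

theorem IsSymmProb.convG_self (hμ : IsSymmProb μ) : IsSymmProb (convG μ μ) where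
  nonneg := convG_nonneg hμ.nonneg hμ.nonneg
  sum_eq_one := by rw [sum_convG, hμ.sum_eq_one, one_mul]
  apply_inv := convG_apply_inv hμ.apply_inv hμ.apply_inv

theorem massOn_convG (f g : G → ℝ) (S : Set G) :
    massOn (convG f g) S = ∑ y, f y * massOn g (y⁻¹ • S) := by
  classical
  have translate (y : G) : ∑ x, S.indicator (fun x ↦ g (y⁻¹ * x)) x = massOn g (y⁻¹ • S) := by
    refine Fintype.sum_equiv (Equiv.mulLeft y⁻¹) _ _ fun x ↦ ?_
    simp [Set.indicator_apply, Set.mem_smul_set_iff_inv_smul_mem]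
  simp only [← translate, mul_sum]
  rw [massOn, sum_comm]
  refine sum_congr rfl fun x _ ↦ ?_
  by_cases hx : x ∈ S <;> simp [hx, convG]

theorem massOn_convG_le {ε : ℝ} {S : Set G} (hf : ∀ x, 0 ≤ f x) (hf1 : ∑ x, f x = 1)
    (h : ∀ y : G, massOn g (y • S) ≤ ε) : massOn (convG f g) S ≤ ε := by
  calc massOn (convG f g) S = ∑ y, f y * massOn g (y⁻¹ • S) := massOn_convG f g S
    _ ≤ ∑ y, f y * ε := sum_le_sum fun y _ ↦ mul_le_mul_of_nonneg_left (h _) (hf y)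
    _ = ε := by rw [← sum_mul, hf1, one_mul]

theorem iterConv_add_add_one (μ : G → ℝ) (m n : ℕ) :
    iterConv μ (m + n + 1) = convG (iterConv μ m) (iterConv μ n) := by
  induction n with
  | zero => rfl
  | succ n ih => rw [← add_assoc, iterConv, ih, convG_assoc, iterConv]

theorem iterConv_two_pow_succ_sub_one (μ : G → ℝ) (k : ℕ) :
    iterConv μ (2 ^ (k + 1) - 1) = convG (iterConv μ (2 ^ k - 1)) (iterConv μ (2 ^ k - 1)) := by
  rw [← iterConv_add_add_one]
  congr 1
  have := Nat.one_le_two_pow (n := k)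
  lia

theorem IsSymmProb.iterConv_two_pow_sub_one (hμ : IsSymmProb μ) (k : ℕ) :
    IsSymmProb (iterConv μ (2 ^ k - 1)) := by
  induction k with
  | zero => exact hμ
  | succ k ih => exact iterConv_two_pow_succ_sub_one μ k ▸ ih.convG_self

theorem l2Sq_iterConv_le (hμ : IsSymmProb μ) (n : ℕ) : l2Sq (iterConv μ n) ≤ l2Sq μ := by
  induction n with
  | zero => exact le_rfl
  | succ n ih => exact (l2Sq_convG_le _ hμ.nonneg hμ.sum_eq_one).trans ih

theorem convG_sub_uniform (hf : ∑ x, f x = 1) (hg : ∑ x, g x = 1) :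
    convG (fun x ↦ f x - (Fintype.card G : ℝ)⁻¹) (fun x ↦ g x - (Fintype.card G : ℝ)⁻¹) =
      fun x ↦ convG f g x - (Fintype.card G : ℝ)⁻¹ := by
  have hcard : (Fintype.card G : ℝ) ≠ 0 := Nat.cast_ne_zero.2 Fintype.card_ne_zero
  funext x
  simp only [convG, sub_mul, mul_sub, sum_sub_distrib, ← sum_mul, ← mul_sum, hf,
    sum_apply_inv_mul, hg, sum_const, card_univ, nsmul_eq_mul]
  field

theorem convG_convG_self_apply_one (hg : ∀ x, g x⁻¹ = g x) :
    convG g (convG g g) 1 = ∑ x, ∑ y, g x * g y * g (x * y) := by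
  refine sum_congr rfl fun x _ ↦ ?_
  rw [mul_one, convG_apply_inv hg hg, convG, mul_sum]
  refine Fintype.sum_equiv (Equiv.mulLeft x⁻¹) _ _ fun y ↦ ?_
  rw [Equiv.coe_mulLeft, mul_inv_cancel_left, ← hg (y⁻¹ * x), mul_inv_rev, inv_inv]
  ring

theorem sum_convG_self_mul_mul (hf : ∀ x, f x⁻¹ = f x) :
    ∑ x, ∑ y, convG f f x * convG f f y * convG f f (x * y) = l2Sq (convG (convG f f) f) := by
  have hff := convG_apply_inv hf hf
  have hfff (x : G) : convG (convG f f) f x⁻¹ = convG (convG f f) f x := by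
    rw [convG_apply_inv hff hf, convG_assoc]
  rw [← convG_convG_self_apply_one hff, ← convG_self_apply_one hfff]
  simp only [convG_assoc]

end Convolution

section Counting

variable {α β : Type*}

theorem mul_card_le_card_of_le_card_fiber [DecidableEq β] {s : Finset α} {t : Finset β} {f : α → β}
    {r : ℝ} (h : ∀ b ∈ t, r ≤ #{a ∈ s | f a = b}) : r * #t ≤ #s := by
  calc r * #t = ∑ _b ∈ t, r := by rw [sum_const, nsmul_eq_mul, mul_comm]
    _ ≤ ∑ b ∈ t, (#{a ∈ s | f a = b} : ℝ) := sum_le_sum h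
    _ ≤ #s := by
      rw [← Nat.cast_sum, sum_card_fiberwise_eq_card_filter]
      exact_mod_cast card_filter_le _ _

theorem card_filter_product_eq_sum (s : Finset α) (t : Finset β) (R : α → β → Prop)
    [DecidableRel R] : #{q ∈ s ×ˢ t | R q.1 q.2} = ∑ x ∈ s, #{y ∈ t | R x y} := by
  simp only [card_filter, sum_product]

theorem exists_subset_forall_pair_of_card_pairs_le {N : Finset α} {U : α → α → Prop}
    [DecidableRel U] (hU : 16 * #{q ∈ N ×ˢ N | U q.1 q.2} ≤ #N ^ 2) :
    ∃ A ⊆ N, 3 * #N ≤ 4 * #A ∧ ∀ x ∈ A, ∀ y ∈ A, #N ≤ 2 * #{z ∈ N | ¬U x z ∧ ¬U y z} := by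
  classical
  refine ⟨{x ∈ N | 4 * #{y ∈ N | U x y} ≤ #N}, filter_subset _ _, ?_, ?_⟩
  · have hsplit := card_filter_add_card_filter_not (s := N) (fun x ↦ 4 * #{y ∈ N | U x y} ≤ #N)
    set B : Finset α := {x ∈ N | ¬4 * #{y ∈ N | U x y} ≤ #N}
    suffices hB : 4 * #B ≤ #N by lia
    rcases N.eq_empty_or_nonempty with rfl | hN
    · simp [B]
    have hcount : #B * #N ≤ 4 * #{q ∈ N ×ˢ N | U q.1 q.2} := by
      rw [card_filter_product_eq_sum, mul_sum, ← smul_eq_mul]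
      calc #B • #N ≤ ∑ x ∈ B, 4 * #{y ∈ N | U x y} :=
            card_nsmul_le_sum _ _ _ fun x hx ↦ (not_le.1 (mem_filter.1 hx).2).le
        _ ≤ ∑ x ∈ N, 4 * #{y ∈ N | U x y} := sum_le_sum_of_subset (filter_subset _ _)
    exact Nat.le_of_mul_le_mul_right (by nlinarith) hN.card_pos
  · intro x hx y hy
    have hcover : N ⊆ {z ∈ N | ¬U x z ∧ ¬U y z} ∪ ({z ∈ N | U x z} ∪ {z ∈ N | U y z}) := by
      intro z hz
      simp only [mem_union, mem_filter, hz, true_and]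
      tauto
    have hcard := (card_le_card hcover).trans (card_union_le _ _)
    have hunion := card_union_le {z ∈ N | U x z} {z ∈ N | U y z}
    have hx := (mem_filter.1 hx).2
    have hy := (mem_filter.1 hy).2
    lia

variable (S : Finset α) (T : Finset β) (R : α → β → Prop) [DecidableRel R]

/-- The common neighbours in `T` of the vertices `x`, `y` of the bipartite graph `R`. -/
def commonNeighbors (x y : α) : Finset β :=
  {b ∈ T | R x b ∧ R y b}

theorem sum_card_pairs_few_commonNeighbors_le {κ : ℝ} (hκ : 0 ≤ κ) :
    ∑ b ∈ T, (#{q ∈ {x ∈ S | R x b} ×ˢ {x ∈ S | R x b} |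
      #(commonNeighbors T R q.1 q.2) < κ} : ℝ) ≤ #S ^ 2 * κ := by
  set P : Finset (α × α) := {q ∈ S ×ˢ S | #(commonNeighbors T R q.1 q.2) < κ}
  have hpairs (b : β) : {q ∈ {x ∈ S | R x b} ×ˢ {x ∈ S | R x b} |
      #(commonNeighbors T R q.1 q.2) < κ} = {q ∈ P | R q.1 b ∧ R q.2 b} := by
    ext q
    simp only [P, mem_filter, mem_product]
    tauto
  have hswap : ∑ b ∈ T, #{q ∈ P | R q.1 b ∧ R q.2 b} = ∑ q ∈ P, #(commonNeighbors T R q.1 q.2) :=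
    sum_card_bipartiteAbove_eq_sum_card_bipartiteBelow fun (b : β) (q : α × α) ↦ R q.1 b ∧ R q.2 b
  have hP : #P ≤ #S ^ 2 := by
    rw [sq, ← card_product]
    exact card_filter_le _ _
  simp only [hpairs]
  rw [← Nat.cast_sum, hswap, Nat.cast_sum]
  calc ∑ q ∈ P, (#(commonNeighbors T R q.1 q.2) : ℝ) ≤ #P • κ :=
        sum_le_card_nsmul _ _ _ fun q hq ↦ (mem_filter.1 hq).2.le
    _ ≤ #S ^ 2 * κ := by
      rw [nsmul_eq_mul]
      gcongr
      exact_mod_cast hP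

variable {S T R} {δ τ : ℝ}

theorem exists_neighborhood_few_sparse_pairs (hδ : 0 ≤ δ) (hτ : 0 ≤ τ) (hτδ : 32 * τ ≤ δ ^ 2)
    (hT : T.Nonempty) (hdense : δ * #S * #T ≤ ∑ b ∈ T, (#{x ∈ S | R x b} : ℝ)) :
    ∃ b ∈ T, δ ^ 2 * #S ^ 2 / 2 + 16 * (#{q ∈ {x ∈ S | R x b} ×ˢ {x ∈ S | R x b} |
      #(commonNeighbors T R q.1 q.2) < τ * #T} : ℝ) ≤ (#{x ∈ S | R x b} : ℝ) ^ 2 := by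
  have hT0 : (0 : ℝ) < #T := by exact_mod_cast hT.card_pos
  have hsq : δ ^ 2 * #S ^ 2 * #T ≤ ∑ b ∈ T, (#{x ∈ S | R x b} : ℝ) ^ 2 := by
    refine le_of_mul_le_mul_left ?_ hT0
    calc #T * (δ ^ 2 * #S ^ 2 * #T) = (δ * #S * #T) ^ 2 := by ring
      _ ≤ (∑ b ∈ T, (#{x ∈ S | R x b} : ℝ)) ^ 2 := by gcongr
      _ ≤ #T * ∑ b ∈ T, (#{x ∈ S | R x b} : ℝ) ^ 2 := sq_sum_le_card_mul_sum_sq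
  have hsparse := sum_card_pairs_few_commonNeighbors_le S T R (mul_nonneg hτ hT0.le)
  refine exists_le_of_sum_le hT ?_
  rw [sum_add_distrib, ← mul_sum, sum_const, nsmul_eq_mul]
  have : 32 * τ * (#S ^ 2 * #T) ≤ δ ^ 2 * (#S ^ 2 * #T) := by gcongr
  linarith

theorem exists_subset_many_commonNeighbors (hδ : 0 ≤ δ) (hτ : 0 ≤ τ) (hτδ : 32 * τ ≤ δ ^ 2)
    (hT : T.Nonempty) (hdense : δ * #S * #T ≤ ∑ b ∈ T, (#{x ∈ S | R x b} : ℝ)) :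
    ∃ A ⊆ S, 3 / 8 * δ * #S ≤ #A ∧ ∀ x ∈ A, ∀ y ∈ A, δ * #S / 4 ≤
      #{z ∈ S | τ * #T ≤ #(commonNeighbors T R x z) ∧ τ * #T ≤ #(commonNeighbors T R y z)} := by
  classical
  obtain ⟨b, -, hb⟩ := exists_neighborhood_few_sparse_pairs hδ hτ hτδ hT hdense
  set N : Finset α := {x ∈ S | R x b}
  have hNS : N ⊆ S := filter_subset _ _
  have hN : δ * #S / 2 ≤ #N := by
    refine le_of_sq_le_sq (le_trans ?_ hb) (Nat.cast_nonneg _)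
    nlinarith
  obtain ⟨A, hAN, hA, hpair⟩ := exists_subset_forall_pair_of_card_pairs_le (N := N)
    (U := fun x y ↦ #(commonNeighbors T R x y) < τ * #T) (by
      rify
      nlinarith)
  rify at hA
  refine ⟨A, hAN.trans hNS, by linarith, fun x hx y hy ↦ ?_⟩
  have hxy := hpair x hx y hy
  rify at hxy
  have hmono : #{z ∈ N | ¬(#(commonNeighbors T R x z) : ℝ) < τ * #T ∧
      ¬(#(commonNeighbors T R y z) : ℝ) < τ * #T} ≤
      #{z ∈ S | τ * #T ≤ #(commonNeighbors T R x z) ∧ τ * #T ≤ #(commonNeighbors T R y z)} := by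
    simp only [not_lt]
    exact card_le_card (filter_subset_filter _ hNS)
  rify at hmono
  linarith

end Counting

section BalogSzemerediGowers

variable {G : Type*} [Group G] [DecidableEq G]

theorem exists_subset_card_mul_inv_le {S : Finset G} {δ τ : ℝ} (hδ : 0 ≤ δ) (hτ : 0 ≤ τ)
    (hτδ : 32 * τ ≤ δ ^ 2) (hS : S.Nonempty)
    (hdense : δ * #S ^ 2 ≤ ∑ b ∈ S, (#{x ∈ S | x * b ∈ S} : ℝ)) :
    ∃ A ⊆ S, 3 / 8 * δ * #S ≤ #A ∧ #(A * A⁻¹) * (δ * τ ^ 2 / 4) ≤ #S := by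
  obtain ⟨A, hAS, hA, hpair⟩ := exists_subset_many_commonNeighbors (R := fun x b ↦ x * b ∈ S)
    hδ hτ hτδ hS (by rwa [mul_assoc, ← sq])
  refine ⟨A, hAS, hA, ?_⟩
  have hS0 : (0 : ℝ) < #S := by exact_mod_cast hS.card_pos
  -- `x y⁻¹ = (x b) (z b)⁻¹ (z c) (y c)⁻¹` whenever `b` is a common neighbour of `x, z` and `c` one
  -- of `y, z`.
  have hrepr := mul_card_le_card_of_le_card_fiber (s := S ×ˢ S ×ˢ S ×ˢ S) (t := A * A⁻¹)
    (f := fun q ↦ q.1 * q.2.1⁻¹ * q.2.2.1 * q.2.2.2⁻¹) (r := δ * #S / 4 * (τ * #S) ^ 2) ?_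
  · simp only [card_product, Nat.cast_mul] at hrepr
    refine le_of_mul_le_mul_left ?_ (pow_pos hS0 3)
    linarith
  intro e he
  obtain ⟨x, hx, y', hy', rfl⟩ := mem_mul.1 he
  obtain ⟨y, hy, rfl⟩ := mem_inv.1 hy'
  set C := commonNeighbors S (fun x b ↦ x * b ∈ S)
  set Z : Finset G := {z ∈ S | τ * #S ≤ #(C x z) ∧ τ * #S ≤ #(C y z)}
  calc δ * #S / 4 * (τ * #S) ^ 2 ≤ #Z * (τ * #S) ^ 2 := by gcongr; exact hpair x hx y hy
    _ = ∑ _z ∈ Z, (τ * #S) ^ 2 := by rw [sum_const, nsmul_eq_mul]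
    _ ≤ ∑ z ∈ Z, (#(C x z ×ˢ C y z) : ℝ) := sum_le_sum fun z hz ↦ by
      rw [card_product, Nat.cast_mul, sq]
      exact mul_le_mul (mem_filter.1 hz).2.1 (mem_filter.1 hz).2.2 (by positivity) (by positivity)
    _ = #(Z.sigma fun z ↦ C x z ×ˢ C y z) := by rw [card_sigma, Nat.cast_sum]
    _ ≤ _ := by
      refine Nat.cast_le.2 (card_le_card_of_injOn
        (fun w ↦ (x * w.2.1, w.1 * w.2.1, w.1 * w.2.2, y * w.2.2)) ?_ ?_)
      · rintro ⟨z, b, c⟩ hw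
        simp only [C, commonNeighbors, coe_sigma, Set.mem_sigma_iff, mem_coe, mem_filter,
          mem_product] at hw ⊢
        exact ⟨⟨hw.2.1.2.1, hw.2.1.2.2, hw.2.2.2.2, hw.2.2.2.1⟩, by group⟩
      · rintro ⟨z, b, c⟩ - ⟨z', b', c'⟩ - h
        simp only [Prod.mk.injEq, mul_right_inj] at h
        obtain ⟨rfl, hz, -, rfl⟩ := h
        rw [mul_left_inj] at hz
        rw [hz]

variable {A : Finset G} {M t : ℝ}

theorem sum_convolution_inv_mul_eq_mulEnergy (A : Finset G) :
    ∑ q ∈ A ×ˢ A, A⁻¹.convolution A (q.1⁻¹ * q.2) = mulEnergy A A⁻¹ := by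
  simp only [convolution]
  rw [← card_filter_product_eq_sum (A ×ˢ A) (A⁻¹ ×ˢ A) fun q r ↦ r.1 * r.2 = q.1⁻¹ * q.2,
    mulEnergy]
  refine card_nbij' (fun q ↦ ((q.2.2, q.2.1⁻¹), (q.1.2⁻¹, q.1.1⁻¹)))
    (fun q ↦ ((q.2.2⁻¹, q.2.1⁻¹), (q.1.2⁻¹, q.1.1))) ?_ ?_ ?_ ?_
  · rintro ⟨⟨u, v⟩, a, b⟩ h
    simp_all [mul_inv_eq_iff_eq_mul, ← mul_assoc, eq_inv_mul_iff_mul_eq]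
  · rintro ⟨⟨u, v⟩, a, b⟩ h
    simp_all [mul_assoc, eq_mul_inv_iff_mul_eq]
  · simp [Set.LeftInvOn]
  · simp [Set.LeftInvOn]

theorem card_pow_three_le_mul_sum_convolution (hA : A.Nonempty)
    (hAA : #(A * A⁻¹) ≤ M * #A) :
    (#A : ℝ) ^ 3 ≤ M * ∑ u ∈ A, ∑ v ∈ A, (A⁻¹.convolution A (u⁻¹ * v) : ℝ) := by
  have henergy := le_card_mul_mul_mulEnergy A A⁻¹
  rw [card_inv, ← sum_convolution_inv_mul_eq_mulEnergy, sum_product] at henergy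
  rify at henergy
  set E : ℝ := ∑ u ∈ A, ∑ v ∈ A, (A⁻¹.convolution A (u⁻¹ * v) : ℝ)
  refine le_of_mul_le_mul_left ?_ (Nat.cast_pos.2 hA.card_pos)
  calc (#A : ℝ) * #A ^ 3 = #A ^ 2 * #A ^ 2 := by ring
    _ ≤ #(A * A⁻¹) * E := henergy
    _ ≤ M * #A * E := by gcongr
    _ = #A * (M * E) := by ring

/-- The quotients `a⁻¹ * b` with `a, b ∈ A` which have at least `t` such representations. For
`#(A * A⁻¹)` small compared to `t` this is an approximate subgroup. -/
noncomputable def popularQuotients (A : Finset G) (t : ℝ) : Finset G :=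
  {z ∈ A⁻¹ * A | t ≤ A⁻¹.convolution A z}

theorem one_mem_popularQuotients (hA : A.Nonempty) (ht : t ≤ #A) : 1 ∈ popularQuotients A t := by
  have hconv : A⁻¹.convolution A 1 = #A := by simp [← card_inter_smul_inv]
  obtain ⟨a, ha⟩ := hA
  exact mem_filter.2 ⟨mem_mul.2 ⟨a⁻¹, inv_mem_inv ha, a, ha, inv_mul_cancel a⟩, by rwa [hconv]⟩

theorem inv_popularQuotients (A : Finset G) (t : ℝ) :
    (popularQuotients A t)⁻¹ = popularQuotients A t := by
  ext z
  have hmem : z⁻¹ ∈ A⁻¹ * A ↔ z ∈ A⁻¹ * A := by rw [← mem_inv', mul_inv_rev, inv_inv]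
  simp only [popularQuotients, mem_inv', mem_filter, hmem, convolution_inv, inv_inv]

theorem exists_le_card_filter_mem_popularQuotients (hA : A.Nonempty) (hM : 0 < M)
    (hAA : #(A * A⁻¹) ≤ M * #A) :
    ∃ u, #A / (2 * M) ≤ #{v ∈ A | u⁻¹ * v ∈ popularQuotients A (#A / (2 * M))} := by
  have hA0 : (0 : ℝ) < #A := Nat.cast_pos.2 hA.card_pos
  set t : ℝ := #A / (2 * M)
  obtain ⟨u, hu, hsum⟩ : ∃ u ∈ A, 2 * t * #A ≤ ∑ v ∈ A, (A⁻¹.convolution A (u⁻¹ * v) : ℝ) := by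
    refine exists_le_of_sum_le hA ?_
    rw [sum_const, nsmul_eq_mul]
    refine le_of_mul_le_mul_left ?_ hM
    calc M * (#A * (2 * t * #A)) = #A ^ 3 := by simp only [t]; field_simp
      _ ≤ _ := card_pow_three_le_mul_sum_convolution hA hAA
  refine ⟨u, le_of_mul_le_mul_right ?_ hA0⟩
  set B : Finset G := {v ∈ A | u⁻¹ * v ∈ popularQuotients A t}
  have hpoint (v : G) (hv : v ∈ A) : (A⁻¹.convolution A (u⁻¹ * v) : ℝ) ≤
      (if u⁻¹ * v ∈ popularQuotients A t then (#A : ℝ) else 0) + t := by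
    split_ifs with h
    · exact (Nat.cast_le.2 convolution_le_card_right).trans (le_add_of_nonneg_right (by positivity))
    · rw [zero_add]
      by_contra! hlt
      exact h (mem_filter.2 ⟨mul_mem_mul (inv_mem_inv hu) hv, hlt.le⟩)
  have hupper : ∑ v ∈ A, (A⁻¹.convolution A (u⁻¹ * v) : ℝ) ≤ #B * #A + #A * t := by
    refine (sum_le_sum hpoint).trans_eq ?_
    rw [sum_add_distrib, ← sum_filter, sum_const, sum_const, nsmul_eq_mul, nsmul_eq_mul]
  linarith

theorem pow_mul_card_popularQuotients_pow_le (hA : A.Nonempty) (ht : 0 ≤ t) (k : ℕ) :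
    t ^ k * #(popularQuotients A t ^ k) ≤ (#(A * A⁻¹) : ℝ) ^ (k + 1) := by
  set H := popularQuotients A t
  suffices hX : t ^ k * #(A * H ^ k * A⁻¹) ≤ (#(A * A⁻¹) : ℝ) ^ (k + 1) by
    refine le_trans ?_ hX
    gcongr ?_ * (?_ : ℝ)
    exact Nat.cast_le.2 <| (card_le_card_mul_left hA).trans (card_le_card_mul_right hA.inv)
  induction k with
  | zero => simp
  | succ k ih =>
    -- `x z w y = (x a) (b w y)` for each of the at least `t` representations `z = a b`.
    have hstep : t * #(A * H ^ (k + 1) * A⁻¹) ≤ #((A * A⁻¹) ×ˢ (A * H ^ k * A⁻¹)) := by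
      refine mul_card_le_card_of_le_card_fiber (f := fun q ↦ q.1 * q.2) fun e he ↦ ?_
      rw [pow_succ'] at he
      obtain ⟨e', he', y, hy, rfl⟩ := mem_mul.1 he
      obtain ⟨x, hx, zw, hzw, rfl⟩ := mem_mul.1 he'
      obtain ⟨z, hz, w, hw, rfl⟩ := mem_mul.1 hzw
      refine (mem_filter.1 hz).2.trans (Nat.cast_le.2 ?_)
      refine card_le_card_of_injOn (fun q ↦ (x * q.1, q.2 * w * y)) ?_ fun q _ r _ h ↦ ?_
      · rintro ⟨a, b⟩ hab
        simp only [coe_filter, Set.mem_ofPred_eq, mem_product] at hab ⊢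
        refine ⟨⟨mul_mem_mul hx hab.1.1, mul_mem_mul (mul_mem_mul hab.1.2 hw) hy⟩, ?_⟩
        rw [← hab.2]
        group
      · simp only [Prod.mk.injEq, mul_right_inj, mul_left_inj] at h
        exact Prod.ext h.1 h.2
    calc t ^ (k + 1) * #(A * H ^ (k + 1) * A⁻¹)
        = t ^ k * (t * #(A * H ^ (k + 1) * A⁻¹)) := by ring
      _ ≤ t ^ k * (#(A * A⁻¹) * #(A * H ^ k * A⁻¹)) := by
        gcongr ?_ * ?_
        simpa only [card_product, Nat.cast_mul] using hstep
      _ = #(A * A⁻¹) * (t ^ k * #(A * H ^ k * A⁻¹)) := by ring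
      _ ≤ #(A * A⁻¹) * (#(A * A⁻¹) : ℝ) ^ (k + 1) := by gcongr
      _ = (#(A * A⁻¹) : ℝ) ^ (k + 1 + 1) := by ring

theorem exists_symm_set_of_card_mul_inv_le (hA : A.Nonempty) (hM : 1 ≤ M)
    (hAA : #(A * A⁻¹) ≤ M * #A) :
    ∃ H : Finset G, 1 ∈ H ∧ H⁻¹ = H ∧ (∀ k : ℕ, #(H ^ k) ≤ (2 * M ^ 2) ^ k * M * #A) ∧
      ∃ u, #A ≤ 2 * M * #{v ∈ A | u⁻¹ * v ∈ H} := by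
  have hA0 : (0 : ℝ) < #A := Nat.cast_pos.2 hA.card_pos
  have ht : #A / (2 * M) ≤ (#A : ℝ) := div_le_self hA0.le (by linarith)
  obtain ⟨u, hu⟩ := exists_le_card_filter_mem_popularQuotients hA (by linarith) hAA
  refine ⟨popularQuotients A (#A / (2 * M)), one_mem_popularQuotients hA ht,
    inv_popularQuotients _ _, fun k ↦ ?_, u, ?_⟩
  · have hpow := pow_mul_card_popularQuotients_pow_le hA (t := #A / (2 * M)) (by positivity) k
    refine le_of_mul_le_mul_left (hpow.trans ?_) (by positivity : 0 < (#A / (2 * M)) ^ k)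
    calc (#(A * A⁻¹) : ℝ) ^ (k + 1) ≤ (M * #A) ^ (k + 1) := by gcongr
      _ = (#A / (2 * M)) ^ k * ((2 * M ^ 2) ^ k * M * #A) := by
        rw [← mul_assoc, ← mul_assoc, ← mul_pow, pow_succ, mul_assoc]
        congr 2
        field_simp
  · rw [div_le_iff₀' (by positivity)] at hu
    exact hu

theorem exists_symm_set_of_dense {S : Finset G} (hM : 64 ≤ M) (hS : S.Nonempty)
    (hdense : (M ^ 4)⁻¹ * #S ^ 2 ≤ ∑ b ∈ S, (#{x ∈ S | x * b ∈ S} : ℝ)) :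
    ∃ H : Finset G, 1 ∈ H ∧ H⁻¹ = H ∧ #H ≤ M ^ 85 * #S ∧
      (∀ k : ℕ, #(H ^ k) ≤ M ^ (57 * (k + 1)) * #H) ∧
      ∃ u, #S ≤ M ^ 34 * #{v ∈ S | u⁻¹ * v ∈ H} := by
  have hS0 : (0 : ℝ) < #S := Nat.cast_pos.2 hS.card_pos
  obtain ⟨A, hAS, hSA, hAA⟩ := exists_subset_card_mul_inv_le (δ := (M ^ 4)⁻¹) (τ := (M ^ 9)⁻¹)
    (by positivity) (by positivity) (by field_simp; linarith) hS hdense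
  replace hSA : #S ≤ M ^ 5 * #A := by
    field_simp at hSA
    nlinarith [pow_pos (show 0 < M by linarith) 4]
  replace hAA : #(A * A⁻¹) ≤ M ^ 28 * #A := by
    field_simp at hAA
    calc (#(A * A⁻¹) : ℝ) ≤ M ^ 22 * 4 * (M ^ 5 * #A) := hAA.trans (by gcongr)
      _ ≤ M ^ 22 * M * (M ^ 5 * #A) := by gcongr; linarith
      _ = M ^ 28 * #A := by ring
  have hA : A.Nonempty := by
    rw [nonempty_iff_ne_empty]
    rintro rfl
    simp only [card_empty, Nat.cast_zero, mul_zero] at hSA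
    linarith
  obtain ⟨H, hH1, hHinv, hpow, u, hu⟩ :=
    exists_symm_set_of_card_mul_inv_le hA (one_le_pow₀ (by linarith)) hAA
  have hpow' (k : ℕ) : #(H ^ k) ≤ M ^ (57 * k + 28) * #A := by
    calc (#(H ^ k) : ℝ) ≤ (2 * (M ^ 28) ^ 2) ^ k * M ^ 28 * #A := hpow k
      _ ≤ (M * (M ^ 28) ^ 2) ^ k * M ^ 28 * #A := by gcongr; linarith
      _ = M ^ (57 * k + 28) * #A := by ring
  have hu' : #A ≤ M ^ 29 * #{v ∈ A | u⁻¹ * v ∈ H} := by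
    calc (#A : ℝ) ≤ 2 * M ^ 28 * #{v ∈ A | u⁻¹ * v ∈ H} := hu
      _ ≤ M * M ^ 28 * #{v ∈ A | u⁻¹ * v ∈ H} := by gcongr; linarith
      _ = M ^ 29 * #{v ∈ A | u⁻¹ * v ∈ H} := by ring
  refine ⟨H, hH1, hHinv, ?_, fun k ↦ (hpow' k).trans ?_, u, ?_⟩
  · calc (#H : ℝ) ≤ M ^ (57 * 1 + 28) * #A := by simpa using hpow' 1
      _ ≤ M ^ 85 * #S := by gcongr
  · have huH : #{v ∈ A | u⁻¹ * v ∈ H} ≤ #H :=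
      card_le_card_of_injOn (u⁻¹ * ·) (fun v hv ↦ (mem_filter.1 hv).2)
        (mul_right_injective _).injOn
    calc M ^ (57 * k + 28) * (#A : ℝ) ≤ M ^ (57 * k + 28) * (M ^ 29 * #H) := by
          gcongr; exact hu'.trans (by gcongr)
      _ = M ^ (57 * (k + 1)) * #H := by ring
  · calc (#S : ℝ) ≤ M ^ 5 * (M ^ 29 * #{v ∈ A | u⁻¹ * v ∈ H}) := hSA.trans (by gcongr)
      _ = M ^ 34 * #{v ∈ A | u⁻¹ * v ∈ H} := by ring
      _ ≤ M ^ 34 * #{v ∈ S | u⁻¹ * v ∈ H} := by gcongr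

end BalogSzemerediGowers

section LevelSets

theorem mul_mul_le_ite_add {a t x y z : ℝ} (ht : 0 ≤ t) (hx : 0 ≤ x) (hy : 0 ≤ y) (hz : 0 ≤ z)
    (hxa : x ≤ a) (hya : y ≤ a) (hza : z ≤ a) :
    x * y * z ≤ (if t ≤ x ∧ t ≤ y ∧ t ≤ z then a ^ 3 else 0) + t * (y * z + x * z + x * y) := by
  have hyz : 0 ≤ t * (y * z) := by positivity
  have hxz : 0 ≤ t * (x * z) := by positivity
  have hxy : 0 ≤ t * (x * y) := by positivity
  split_ifs with h
  · have : x * y * z ≤ a * a * a := by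
      have ha : 0 ≤ a := hx.trans hxa
      gcongr
    linarith
  · rcases lt_or_ge x t with hxt | hxt
    · nlinarith [mul_le_mul_of_nonneg_right hxt.le (mul_nonneg hy hz)]
    rcases lt_or_ge y t with hyt | hyt
    · nlinarith [mul_le_mul_of_nonneg_right hyt.le (mul_nonneg hx hz)]
    have hzt : z < t := lt_of_not_ge fun hzt ↦ h ⟨hxt, hyt, hzt⟩
    nlinarith [mul_le_mul_of_nonneg_right hzt.le (mul_nonneg hx hy)]

/-- The superlevel set `{x | t ≤ η x}`. -/
noncomputable def levelSet {α : Type*} [Fintype α] (η : α → ℝ) (t : ℝ) : Finset α :=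
  {x | t ≤ η x}

theorem mem_levelSet {α : Type*} [Fintype α] {η : α → ℝ} {t : ℝ} {x : α} :
    x ∈ levelSet η t ↔ t ≤ η x := by
  simp [levelSet]

variable {G : Type*} [Group G] [Fintype G] [DecidableEq G] {η : G → ℝ} {a t M : ℝ}

theorem sum_mul_mul_le_card_levelSet (hη : ∀ x, 0 ≤ η x) (hη1 : ∑ x, η x = 1) (hmax : ∀ x, η x ≤ a)
    (ht : 0 ≤ t) :
    ∑ x, ∑ b, η x * η b * η (x * b) ≤
      a ^ 3 * ∑ b ∈ levelSet η t, (#{x ∈ levelSet η t | x * b ∈ levelSet η t} : ℝ) + 3 * t := by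
  refine (sum_le_sum fun x _ ↦ sum_le_sum fun b _ ↦ mul_mul_le_ite_add ht (hη x) (hη b)
    (hη (x * b)) (hmax x) (hmax b) (hmax (x * b))).trans_eq ?_
  have hcount : ∑ x, ∑ b, (if t ≤ η x ∧ t ≤ η b ∧ t ≤ η (x * b) then a ^ 3 else 0) =
      a ^ 3 * ∑ b ∈ levelSet η t, (#{x ∈ levelSet η t | x * b ∈ levelSet η t} : ℝ) := by
    simp only [mem_levelSet]
    rw [sum_comm, levelSet, sum_filter, mul_sum]
    refine sum_congr rfl fun b _ ↦ ?_
    split_ifs with hb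
    · rw [← sum_filter, sum_const, nsmul_eq_mul, mul_comm, filter_filter]
      simp only [hb, true_and]
    · simp [hb]
  have hsum₁ : ∑ x, ∑ b, η b * η (x * b) = 1 := by
    rw [sum_comm]
    simp only [← mul_sum, sum_apply_mul_right, hη1, mul_one]
  have hsum₂ : ∑ x, ∑ b, η x * η (x * b) = 1 := by
    simp only [← mul_sum, sum_apply_mul_left, hη1, mul_one]
  have hsum₃ : ∑ x, ∑ b, η x * η b = 1 := by
    simp only [← mul_sum, hη1, mul_one]
  simp only [sum_add_distrib, ← mul_sum _ _ t, hcount, hsum₁, hsum₂, hsum₃]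
  norm_num [mul_comm]

theorem exists_dense_levelSet (ha : 0 < a) (hM : 64 ≤ M) (hη : ∀ x, 0 ≤ η x)
    (hη1 : ∑ x, η x = 1) (hmax : ∀ x, η x ≤ a)
    (hE : a / M ≤ ∑ x, ∑ b, η x * η b * η (x * b)) :
    ∃ S : Finset G, (∀ x ∈ S, a / (4 * M) ≤ η x) ∧ #S * a ≤ 4 * M ∧ 1 ≤ M ^ 2 * (#S * a) ∧
      (M ^ 4)⁻¹ * #S ^ 2 ≤ ∑ b ∈ S, (#{x ∈ S | x * b ∈ S} : ℝ) := by
  have : 0 < M := by linarith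
  have hE' := hE.trans (sum_mul_mul_le_card_levelSet hη hη1 hmax
    (t := a / (4 * M)) (by positivity))
  have hlevel : ∀ x ∈ levelSet η (a / (4 * M)), a / (4 * M) ≤ η x := fun x ↦ mem_levelSet.1
  generalize levelSet η (a / (4 * M)) = S at hE' hlevel
  set Q : ℝ := ∑ b ∈ S, (#{x ∈ S | x * b ∈ S} : ℝ)
  have hupper : #S * a ≤ 4 * M := by
    have hmass : #S • (a / (4 * M)) ≤ 1 := by
      calc #S • (a / (4 * M)) ≤ ∑ x ∈ S, η x := card_nsmul_le_sum _ _ _ hlevel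
        _ ≤ ∑ x, η x := sum_le_univ_sum_of_nonneg hη
        _ = 1 := hη1
    rwa [nsmul_eq_mul, ← mul_div_assoc, div_le_one (by positivity)] at hmass
  have hQ : 1 ≤ 4 * M * (a ^ 2 * Q) := by
    refine le_of_mul_le_mul_left ?_ (by positivity : 0 < a / (4 * M))
    calc a / (4 * M) * 1 = a / M - 3 * (a / (4 * M)) := by field_simp; norm_num
      _ ≤ a ^ 3 * Q := by linarith
      _ = a / (4 * M) * (4 * M * (a ^ 2 * Q)) := by field_simp
  refine ⟨S, hlevel, hupper, ?_, ?_⟩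
  · have hQle : Q ≤ #S * #S := by
      rw [← nsmul_eq_mul]
      exact sum_le_card_nsmul _ _ _ fun b _ ↦ Nat.cast_le.2 (card_filter_le _ _)
    have hsq : 1 ≤ (M ^ 2 * (#S * a)) ^ 2 := by
      calc 1 ≤ 4 * M * (a ^ 2 * Q) := hQ
        _ ≤ M ^ 3 * M * (a ^ 2 * (#S * #S)) := by
          gcongr
          nlinarith [pow_le_pow_left₀ (by norm_num) hM 3]
        _ = (M ^ 2 * (#S * a)) ^ 2 := by ring
    exact (one_le_sq_iff₀ (by positivity)).1 hsq
  · rw [inv_mul_le_iff₀ (by positivity)]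
    refine le_of_mul_le_mul_left ?_ (by positivity : 0 < a ^ 2)
    calc a ^ 2 * (#S : ℝ) ^ 2 = (#S * a) ^ 2 := by ring
      _ ≤ (4 * M) ^ 2 := by gcongr
      _ ≤ (4 * M) ^ 2 * (4 * M * (a ^ 2 * Q)) := le_mul_of_one_le_right (by positivity) hQ
      _ = 64 * (M ^ 3 * (a ^ 2 * Q)) := by ring
      _ ≤ M * (M ^ 3 * (a ^ 2 * Q)) := by gcongr
      _ = a ^ 2 * (M ^ 4 * Q) := by ring

theorem exists_approximate_subgroup_of_large_energy (ha : 0 < a) (hM : 64 ≤ M)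
    (hη : ∀ x, 0 ≤ η x) (hη1 : ∑ x, η x = 1) (hmax : ∀ x, η x ≤ a)
    (hE : a / M ≤ ∑ x, ∑ b, η x * η b * η (x * b)) :
    ∃ H : Finset G, 1 ∈ H ∧ H⁻¹ = H ∧ #H * a ≤ M ^ 87 ∧
      (∀ k : ℕ, #(H ^ k) ≤ M ^ (57 * (k + 1)) * #H) ∧
      ∃ u : G, 1 ≤ M ^ 38 * massOn η (u • (H : Set G)) := by
  obtain ⟨S, hlevel, hSa, hSa', hdense⟩ := exists_dense_levelSet ha hM hη hη1 hmax hE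
  have hM4 : 4 * M ≤ M ^ 2 := by nlinarith
  have hS : S.Nonempty := by
    rw [nonempty_iff_ne_empty]
    rintro rfl
    norm_num at hSa'
  obtain ⟨H, hH1, hHinv, hHS, hpow, u, hu⟩ := exists_symm_set_of_dense hM hS hdense
  refine ⟨H, hH1, hHinv, ?_, hpow, u, ?_⟩
  · calc #H * a ≤ M ^ 85 * #S * a := by gcongr
      _ = M ^ 85 * (#S * a) := by ring
      _ ≤ M ^ 85 * M ^ 2 := by gcongr; exact hSa.trans hM4
      _ = M ^ 87 := by ring
  · set B : Finset G := {v ∈ S | u⁻¹ * v ∈ H}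
    have hmass : #B * (a / (4 * M)) ≤ massOn η (u • (H : Set G)) := by
      rw [← nsmul_eq_mul]
      calc #B • (a / (4 * M)) ≤ ∑ v ∈ B, η v :=
            card_nsmul_le_sum _ _ _ fun v hv ↦ hlevel v (mem_filter.1 hv).1
        _ = ∑ v ∈ B, (u • (H : Set G)).indicator η v := sum_congr rfl fun v hv ↦ by
          rw [Set.indicator_of_mem]
          exact Set.mem_smul_set_iff_inv_smul_mem.2 (mem_filter.1 hv).2
        _ ≤ massOn η (u • (H : Set G)) :=
          sum_le_univ_sum_of_nonneg fun v ↦ Set.indicator_nonneg (fun x _ ↦ hη x) v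
    calc 1 ≤ M ^ 2 * (#S * a) := hSa'
      _ ≤ M ^ 2 * (M ^ 34 * #B * a) := by gcongr
      _ = M ^ 36 * (4 * M) * (#B * (a / (4 * M))) := by field_simp
      _ ≤ M ^ 36 * M ^ 2 * massOn η (u • (H : Set G)) := by gcongr
      _ = M ^ 38 * massOn η (u • (H : Set G)) := by ring

end LevelSets

open Matrix MatrixGroups
open Matrix.SpecialLinearGroup (diag2 diag2_coe' diag2_inv mem_center_iff transvection
  transvection_coe)

section SpecialLinearTwo

variable {F : Type*} [Field F]

theorem coe_inv_eq_trace_smul_one_sub (g : SL(2, F)) : (g⁻¹).1 = g.1.trace • 1 - g.1 := by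
  rw [Matrix.SpecialLinearGroup.coe_inv, adjugate_fin_two, trace_fin_two]
  ext i j
  fin_cases i <;> fin_cases j <;> simp

theorem trace_inv_mul (g h : SL(2, F)) :
    (g⁻¹ * h).1.trace = g.1.trace * h.1.trace - (g * h).1.trace := by
  rw [Matrix.SpecialLinearGroup.coe_mul, coe_inv_eq_trace_smul_one_sub, sub_mul]
  simp

theorem trace_inv (g : SL(2, F)) : (g⁻¹).1.trace = g.1.trace := by
  simp [adjugate_fin_two, trace_fin_two, add_comm]

theorem trace_mul_mul_inv (g h : SL(2, F)) : (g * h * g⁻¹).1.trace = h.1.trace := by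
  rw [Matrix.SpecialLinearGroup.coe_mul, trace_mul_comm, ← Matrix.SpecialLinearGroup.coe_mul,
    inv_mul_cancel_left]

theorem mem_center_iff_entries {g : SL(2, F)} :
    g ∈ Subgroup.center SL(2, F) ↔ g 0 1 = 0 ∧ g 1 0 = 0 ∧ g 0 0 = g 1 1 := by
  rw [mem_center_iff]
  constructor
  · rintro ⟨r, -, hr⟩
    simp [← hr]
  · rintro ⟨h01, h10, h⟩
    have hdet := g.det_coe
    rw [det_fin_two, h01, h] at hdet
    refine ⟨g 1 1, by rw [Fintype.card_fin]; linear_combination hdet, ?_⟩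
    ext i j
    fin_cases i <;> fin_cases j <;> simp [h01, h10, h]

theorem trace_sq_eq_four_of_mem_center {g : SL(2, F)} (hg : g ∈ Subgroup.center SL(2, F)) :
    g.1.trace ^ 2 = 4 := by
  obtain ⟨h01, -, h⟩ := mem_center_iff_entries.1 hg
  have hdet := g.det_coe
  rw [det_fin_two, h01, h] at hdet
  rw [trace_fin_two, h]
  linear_combination 4 * hdet

theorem exists_eq_smul_one_add_smul_of_commute {h w : SL(2, F)}
    (hh : h ∉ Subgroup.center SL(2, F)) (hc : Commute h w) :
    ∃ a b : F, w.1 = a • (1 : Matrix (Fin 2) (Fin 2) F) + b • h.1 := by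
  have entry (i j) : (h * w) i j = (w * h) i j := by rw [hc.eq]
  have e00 := entry 0 0
  have e01 := entry 0 1
  have e10 := entry 1 0
  simp only [Matrix.SpecialLinearGroup.coe_mul, mul_apply, Fin.sum_univ_two] at e00 e01 e10
  suffices ∃ b, w 0 1 = b * h 0 1 ∧ w 1 0 = b * h 1 0 ∧ w 0 0 - w 1 1 = b * (h 0 0 - h 1 1) by
    obtain ⟨b, hb01, hb10, hb⟩ := this
    refine ⟨w 0 0 - b * h 0 0, b, ?_⟩
    ext i j
    fin_cases i <;> fin_cases j <;> simp [hb01, hb10]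
    linear_combination -hb
  by_cases h01 : h 0 1 = 0
  · by_cases h10 : h 1 0 = 0
    · have hd : h 0 0 - h 1 1 ≠ 0 := fun hd ↦
        hh (mem_center_iff_entries.2 ⟨h01, h10, sub_eq_zero.1 hd⟩)
      refine ⟨(w 0 0 - w 1 1) / (h 0 0 - h 1 1), ?_, ?_, by field_simp⟩
      · field_simp; linear_combination e01
      · field_simp; linear_combination -e10
    · refine ⟨w 1 0 / h 1 0, ?_, by field_simp, ?_⟩
      · field_simp; linear_combination -e00
      · field_simp; linear_combination e10
  · refine ⟨w 0 1 / h 0 1, by field_simp, ?_, ?_⟩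
    · field_simp; linear_combination e00
    · field_simp; linear_combination -e01

theorem commute_of_commute_of_notMem_center {w g h : SL(2, F)}
    (hw : w ∉ Subgroup.center SL(2, F)) (hg : Commute w g) (hh : Commute w h) : Commute g h := by
  obtain ⟨a, b, hab⟩ := exists_eq_smul_one_add_smul_of_commute hw hg
  apply Matrix.SpecialLinearGroup.coeMonoidHom_injective
  have hwh := congrArg Subtype.val hh.eq
  simp only [Matrix.SpecialLinearGroup.coe_mul] at hwh
  simp [hab, add_mul, mul_add, hwh]

theorem det_smul_one_add_smul (h : SL(2, F)) (a b : F) :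
    (a • (1 : Matrix (Fin 2) (Fin 2) F) + b • h.1).det = a ^ 2 + a * b * h.1.trace + b ^ 2 := by
  have hdet := h.det_coe
  simp only [det_fin_two] at hdet
  simp [det_fin_two, trace_fin_two]
  linear_combination b ^ 2 * hdet

theorem eq_or_eq_inv_of_commute_of_trace_eq (h2 : (2 : F) ≠ 0) {h w v : SL(2, F)}
    (hh : h.1.trace ^ 2 ≠ 4) (hw : Commute h w) (hv : Commute h v)
    (htr : w.1.trace = v.1.trace) : v = w ∨ v = w⁻¹ := by
  have hns : h ∉ Subgroup.center SL(2, F) := fun hc ↦ hh (trace_sq_eq_four_of_mem_center hc)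
  obtain ⟨a, b, hab⟩ := exists_eq_smul_one_add_smul_of_commute hns hw
  obtain ⟨c, d, hcd⟩ := exists_eq_smul_one_add_smul_of_commute hns hv
  have hdetw := w.det_coe
  have hdetv := v.det_coe
  have htr' := htr
  rw [hab, det_smul_one_add_smul] at hdetw
  rw [hcd, det_smul_one_add_smul] at hdetv
  rw [hab, hcd] at htr'
  simp only [trace_add, trace_smul, trace_one, Fintype.card_fin, smul_eq_mul] at htr'
  push_cast at htr'
  have hbd : b ^ 2 = d ^ 2 := by
    apply mul_right_cancel₀ (sub_ne_zero.2 hh)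
    linear_combination (a * 2 + b * h.1.trace + c * 2 + d * h.1.trace) * htr'
      - 4 * hdetw + 4 * hdetv
  rcases sq_eq_sq_iff_eq_or_eq_neg.1 hbd with rfl | rfl
  · left
    have hac : a = c := mul_right_cancel₀ h2 (by linear_combination htr')
    exact Subtype.ext (by rw [hab, hcd, hac])
  · right
    have hac : c = a * 2 - d * h.1.trace - a :=
      mul_right_cancel₀ h2 (by linear_combination -htr')
    apply Subtype.ext
    rw [coe_inv_eq_trace_smul_one_sub, hab, hcd]
    simp only [trace_add, trace_smul, trace_one, Fintype.card_fin, smul_eq_mul]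
    push_cast
    rw [hac]
    module

theorem specialLinear_smul_apply (g : SL(2, F)) (v : Fin 2 → F) (i : Fin 2) :
    (g • v) i = g i 0 * v 0 + g i 1 * v 1 := by
  simp [Matrix.SpecialLinearGroup.smul_def, Matrix.smul_eq_mulVec, mulVec, dotProduct]

/-- The area form on the plane; `wedge v w = 0` says that `v` and `w` are parallel. -/
def wedge (v w : Fin 2 → F) : F := v 0 * w 1 - v 1 * w 0

theorem wedge_comm (v w : Fin 2 → F) : wedge v w = -wedge w v := by
  simp only [wedge]
  ring

theorem wedge_self (v : Fin 2 → F) : wedge v v = 0 := by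
  rw [wedge, mul_comm, sub_self]

theorem exists_eq_smul_of_wedge_eq_zero {v w : Fin 2 → F} (hv : v ≠ 0) (h : wedge w v = 0) :
    ∃ c : F, w = c • v := by
  rw [wedge, sub_eq_zero] at h
  obtain ⟨i, hi⟩ := Function.ne_iff.1 hv
  refine ⟨w i / v i, ?_⟩
  ext j
  rw [Pi.zero_apply] at hi
  fin_cases i <;> fin_cases j <;> simp_all [field]

theorem inv_smul_eq_of_smul_eq {g : SL(2, F)} {v : Fin 2 → F} {c : Fˣ} (h : g • v = c • v) :
    g⁻¹ • v = c⁻¹ • v := by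
  rw [inv_smul_eq_iff, smul_comm, h, inv_smul_smul]

/-- The group of matrices having `v` as an eigenvector (a Borel subgroup when `v ≠ 0`). -/
def lineStabilizer (v : Fin 2 → F) : Subgroup SL(2, F) where
  carrier := {g | ∃ c : Fˣ, g • v = c • v}
  one_mem' := ⟨1, by simp⟩
  mul_mem' := by
    rintro g h ⟨c, hc⟩ ⟨d, hd⟩
    exact ⟨d * c, by rw [mul_smul, hd, smul_comm, hc, smul_smul]⟩
  inv_mem' := by
    rintro g ⟨c, hc⟩
    exact ⟨c⁻¹, inv_smul_eq_of_smul_eq hc⟩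

theorem mem_lineStabilizer_iff_wedge_eq_zero {v : Fin 2 → F} (hv : v ≠ 0) {g : SL(2, F)} :
    g ∈ lineStabilizer v ↔ wedge (g • v) v = 0 := by
  constructor
  · rintro ⟨c, hc⟩
    rw [hc, wedge]
    simp [Units.smul_def]
    ring
  · intro h
    obtain ⟨c, hc⟩ := exists_eq_smul_of_wedge_eq_zero hv h
    have hc0 : c ≠ 0 := by
      rintro rfl
      rw [zero_smul, smul_eq_zero_iff_eq] at hc
      exact hv hc
    exact ⟨Units.mk0 c hc0, hc⟩

theorem lineStabilizer_ne_top {v : Fin 2 → F} (hv : v ≠ 0) : lineStabilizer v ≠ ⊤ := by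
  intro h
  have hmem (g : SL(2, F)) : wedge (g • v) v = 0 :=
    (mem_lineStabilizer_iff_wedge_eq_zero hv).1 (h ▸ Subgroup.mem_top g)
  have hupper : v 1 = 0 := by
    simpa [wedge, specialLinear_smul_apply, transvection_coe, mul_comm (v 1), add_mul]
      using hmem (transvection zero_ne_one 1)
  have hlower : v 0 = 0 := by
    simpa [wedge, specialLinear_smul_apply, transvection_coe, mul_comm (v 1), add_mul]
      using hmem (transvection one_ne_zero 1)
  exact hv (funext (Fin.forall_fin_two.2 ⟨hlower, hupper⟩))

theorem exists_mem_notMem_lineStabilizer {A : Set SL(2, F)} (hA : Subgroup.closure A = ⊤)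
    {v : Fin 2 → F} (hv : v ≠ 0) : ∃ a ∈ A, a ∉ lineStabilizer v := by
  by_contra! h
  exact lineStabilizer_ne_top hv (top_le_iff.1 (hA ▸ (Subgroup.closure_le _).2 h))

theorem eq_one_of_smul_eq_of_smul_eq {g : SL(2, F)} {v w : Fin 2 → F} (hv : g • v = v)
    (hw : g • w = w) (hvw : wedge v w ≠ 0) : g = 1 := by
  have hv0 := congrFun hv 0
  have hv1 := congrFun hv 1
  have hw0 := congrFun hw 0
  have hw1 := congrFun hw 1
  simp only [specialLinear_smul_apply] at hv0 hv1 hw0 hw1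
  rw [wedge] at hvw
  ext i j
  apply mul_left_cancel₀ hvw
  fin_cases i <;> fin_cases j <;>
    simp only [Fin.zero_eta, Fin.mk_one, Matrix.SpecialLinearGroup.coe_one, one_apply_eq,
      one_apply_ne, ne_eq, zero_ne_one, one_ne_zero, not_false_eq_true]
  · linear_combination w 1 * hv0 - v 1 * hw0
  · linear_combination v 0 * hw0 - w 0 * hv0
  · linear_combination w 1 * hv1 - v 1 * hw1
  · linear_combination v 0 * hw1 - w 0 * hv1

theorem trace_eq_add_inv_of_smul_eq {g : SL(2, F)} {v : Fin 2 → F} (hv : v ≠ 0) {c : Fˣ}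
    (h : g • v = c • v) : g.1.trace = c + (c⁻¹ : Fˣ) := by
  have hsum : g.1.trace • v = ((c : F) + (c⁻¹ : Fˣ)) • v := by
    calc g.1.trace • v = g • v + g⁻¹ • v := by
          simp only [Matrix.SpecialLinearGroup.smul_def, coe_inv_eq_trace_smul_one_sub,
            smul_eq_mulVec, sub_mulVec, smul_mulVec, one_mulVec, add_sub_cancel]
      _ = ((c : F) + (c⁻¹ : Fˣ)) • v := by
          rw [h, inv_smul_eq_of_smul_eq h, add_smul, Units.smul_def, Units.smul_def]
  exact smul_left_injective F hv hsum

theorem trace_mul_eq_two_of_mem_lineStabilizer {x y : SL(2, F)} {v : Fin 2 → F} (hv : v ≠ 0)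
    (hx : x ∈ lineStabilizer v) (hy : y ∈ lineStabilizer v) (htr : x.1.trace = y.1.trace) :
    (x * y).1.trace = 2 ∨ (x * y⁻¹).1.trace = 2 := by
  obtain ⟨c, hc⟩ := hx
  obtain ⟨d, hd⟩ := hy
  have htwo {g : SL(2, F)} (hg : g • v = v) : g.1.trace = 2 := by
    rw [trace_eq_add_inv_of_smul_eq hv (c := 1) (by rw [hg, one_smul]), inv_one, Units.val_one,
      one_add_one_eq_two]
  have hcd : ((d : F) - c) * (d * c - 1) = 0 := by
    rw [trace_eq_add_inv_of_smul_eq hv hc, trace_eq_add_inv_of_smul_eq hv hd] at htr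
    linear_combination -(d : F) * c * htr + (d : F) * c.mul_inv - (c : F) * d.mul_inv
  rcases mul_eq_zero.1 hcd with h | h
  · right
    obtain rfl : d = c := Units.ext (sub_eq_zero.1 h)
    exact htwo (by rw [mul_smul, inv_smul_eq_of_smul_eq hd, smul_comm, hc, inv_smul_smul])
  · left
    have hdc : d * c = 1 := Units.ext (by push_cast; exact sub_eq_zero.1 h)
    exact htwo (by rw [mul_smul, hd, smul_comm, hc, smul_smul, hdc, one_smul])

/-- The square-zero matrix `w ↦ wedge w v • v`. -/
def squareZero (v : Fin 2 → F) : Matrix (Fin 2) (Fin 2) F := vecMulVec v ![v 1, -v 0]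

theorem squareZero_mulVec (v w : Fin 2 → F) : squareZero v *ᵥ w = wedge w v • v := by
  ext i
  fin_cases i <;> simp [squareZero, wedge] <;> ring

theorem trace_mul_squareZero (x : Matrix (Fin 2) (Fin 2) F) (v : Fin 2 → F) :
    (x * squareZero v).trace = wedge (x *ᵥ v) v := by
  rw [squareZero, mul_vecMulVec, trace_vecMulVec]
  simp [wedge]
  ring

theorem exists_eq_smul_squareZero {N : Matrix (Fin 2) (Fin 2) F} (hN : N ≠ 0)
    (htr : N.trace = 0) (hdet : N.det = 0) :
    ∃ v ≠ 0, ∃ c : F, c ≠ 0 ∧ N = c • squareZero v := by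
  rw [trace_fin_two] at htr
  rw [det_fin_two] at hdet
  by_cases h01 : N 0 1 = 0
  · have h00 : N 0 0 = 0 := by simpa [h01, eq_neg_of_add_eq_zero_right htr] using hdet
    have h10 : N 1 0 ≠ 0 := by
      intro h10
      apply hN
      ext i j
      fin_cases i <;> fin_cases j <;> simp_all
    refine ⟨![0, 1], by simp, N 1 0, h10, ?_⟩
    ext i j
    fin_cases i <;> fin_cases j <;> simp_all [squareZero]
  · refine ⟨![N 0 1, -N 0 0], by simp [h01], -(N 0 1)⁻¹, by simpa using h01, ?_⟩
    ext i j
    fin_cases i <;> fin_cases j <;> simp [squareZero]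
    · field_simp
    · field_simp
    · field_simp; linear_combination -hdet + N 0 0 * htr
    · field_simp; linear_combination htr

theorem mem_center_of_three_eigenvectors {x : SL(2, F)} {u v w : Fin 2 → F}
    (hu : wedge (x • u) u = 0) (hv : wedge (x • v) v = 0) (hw : wedge (x • w) w = 0)
    (huv : wedge u v ≠ 0) (huw : wedge u w ≠ 0) (hvw : wedge v w ≠ 0) :
    x ∈ Subgroup.center SL(2, F) := by
  have hne := mul_ne_zero (mul_ne_zero huv huw) hvw
  simp only [wedge, specialLinear_smul_apply] at hu hv hw hne
  refine mem_center_iff_entries.2 ⟨?_, ?_, ?_⟩ <;> apply mul_left_cancel₀ hne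
  · linear_combination hu * (v 0 * w 0 * (v 0 * w 1 - v 1 * w 0))
      - hv * (u 0 * w 0 * (u 0 * w 1 - u 1 * w 0)) + hw * (u 0 * v 0 * (u 0 * v 1 - u 1 * v 0))
  · linear_combination -hu * (v 1 * w 1 * (v 0 * w 1 - v 1 * w 0))
      + hv * (u 1 * w 1 * (u 0 * w 1 - u 1 * w 0)) - hw * (u 1 * v 1 * (u 0 * v 1 - u 1 * v 0))
  · linear_combination -hu * ((v 0 * w 1) ^ 2 - (v 1 * w 0) ^ 2)
      + hv * ((u 0 * w 1) ^ 2 - (u 1 * w 0) ^ 2) - hw * ((u 0 * v 1) ^ 2 - (u 1 * v 0) ^ 2)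

theorem exists_eigenlines {x : SL(2, F)} (hx : x ∉ Subgroup.center SL(2, F)) :
    ∃ v ≠ 0, ∃ w ≠ 0, ∀ u : Fin 2 → F, u ≠ 0 → x ∈ lineStabilizer u →
      wedge u v = 0 ∨ wedge u w = 0 := by
  by_cases hone : ∃ v ≠ 0, x ∈ lineStabilizer v
  · obtain ⟨v, hv, hxv⟩ := hone
    by_cases htwo : ∃ w ≠ 0, x ∈ lineStabilizer w ∧ wedge v w ≠ 0
    · obtain ⟨w, hw, hxw, hvw⟩ := htwo
      refine ⟨v, hv, w, hw, fun u hu hxu ↦ ?_⟩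
      by_contra! h
      rw [mem_lineStabilizer_iff_wedge_eq_zero ‹_›] at hxu hxv hxw
      exact hx (mem_center_of_three_eigenvectors hxu hxv hxw h.1 h.2 hvw)
    · push Not at htwo
      exact ⟨v, hv, v, hv, fun u hu hxu ↦ .inl (by rw [wedge_comm, htwo u hu hxu, neg_zero])⟩
  · push Not at hone
    exact ⟨![1, 0], by simp, ![1, 0], by simp, fun u hu hxu ↦ absurd hxu (hone u hu)⟩

theorem trace_squareZero (v : Fin 2 → F) : (squareZero v).trace = 0 := by
  rw [← one_mul (squareZero v), trace_mul_squareZero, one_mulVec, wedge_self]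

theorem exists_eq_smul_one_add_smul_squareZero {g : SL(2, F)} {e : F} (he : e ^ 2 = 1)
    (htr : g.1.trace = 2 * e) (hg : g.1 ≠ e • 1) :
    ∃ v ≠ 0, ∃ c : F, c ≠ 0 ∧ g.1 = e • 1 + c • squareZero v := by
  have hN : -e • 1 + g.1 ≠ 0 := fun h ↦ hg (neg_add_eq_zero.1 (by rwa [← neg_smul])).symm
  have htrN : (-e • 1 + g.1).trace = 0 := by
    rw [trace_add, trace_smul, trace_one, htr, Fintype.card_fin, smul_eq_mul]
    push_cast
    ring
  have hdetN : (-e • 1 + g.1).det = 0 := by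
    have hdet := det_smul_one_add_smul g (-e) 1
    rw [one_smul, htr] at hdet
    rw [hdet]
    linear_combination -he
  obtain ⟨v, hv, c, hc, hcN⟩ := exists_eq_smul_squareZero hN htrN hdetN
  exact ⟨v, hv, c, hc, by rw [← hcN, neg_smul, add_neg_cancel_left]⟩

theorem exists_eigenvector_fixed_by_mul {x y : SL(2, F)} (htr : x.1.trace = y.1.trace)
    (hxy : (x * y).1.trace = 2) (hne : x * y ≠ 1) :
    ∃ v ≠ 0, x ∈ lineStabilizer v ∧ (x * y) • v = v := by
  obtain ⟨v, hv, c, hc, hcv⟩ := exists_eq_smul_one_add_smul_squareZero (one_pow 2)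
    (by rw [hxy, mul_one]) (fun h ↦ hne (Subtype.ext (h.trans (one_smul ..))))
  rw [one_smul] at hcv
  refine ⟨v, hv, ?_, ?_⟩
  · have htrace := trace_inv_mul x (x * y)
    rw [inv_mul_cancel_left, hxy, ← htr, Matrix.SpecialLinearGroup.coe_mul x (x * y), hcv, mul_add,
      mul_one, trace_add, Matrix.mul_smul, trace_smul, trace_mul_squareZero, smul_eq_mul] at htrace
    have hwedge : c * wedge (x.1 *ᵥ v) v = 0 := by linear_combination htrace
    exact (mem_lineStabilizer_iff_wedge_eq_zero hv).2 ((mul_eq_zero.1 hwedge).resolve_left hc)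
  · change (x * y).1 *ᵥ v = v
    rw [hcv, add_mulVec, one_mulVec, smul_mulVec,
      squareZero_mulVec, wedge_self, zero_smul, smul_zero, add_zero]

theorem exists_eq_smul_commutator {u v D : Matrix (Fin 2) (Fin 2) F} (huv : u * v ≠ v * u)
    (htr : D.trace = 0) (hu : (D * u).trace = 0) (hv : (D * v).trace = 0) :
    ∃ c : F, D = c • (u * v - v * u) := by
  let coords (m : Matrix (Fin 2) (Fin 2) F) : Fin 3 → F := ![m 0 0 - m 1 1, m 1 0, m 0 1]
  let d : Fin 3 → F := ![D 0 0, D 0 1, D 1 0]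
  simp only [trace_fin_two, Matrix.mul_apply, Fin.sum_univ_two] at htr hu hv
  have hD : D 1 1 = -D 0 0 := by linear_combination htr
  have hdu : coords u ⬝ᵥ d = 0 := by
    simp only [coords, d, vec3_dotProduct, Matrix.cons_val]
    linear_combination hu - u 1 1 * hD
  have hdv : coords v ⬝ᵥ d = 0 := by
    simp only [coords, d, vec3_dotProduct, Matrix.cons_val]
    linear_combination hv - v 1 1 * hD
  have hcomm : u * v - v * u = !![-(coords u ⨯₃ coords v) 0, -(coords u ⨯₃ coords v) 1;
      -(coords u ⨯₃ coords v) 2, (coords u ⨯₃ coords v) 0] := by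
    ext i j
    fin_cases i <;> fin_cases j <;> simp [coords, cross_apply, Matrix.mul_apply] <;> ring
  have hcross : coords u ⨯₃ coords v ≠ 0 := by
    intro h
    refine huv (sub_eq_zero.1 (hcomm.trans ?_))
    ext i j
    fin_cases i <;> fin_cases j <;> simp [h]
  have hdep : (coords u ⨯₃ coords v) ⨯₃ d = 0 := by
    rw [cross_cross_eq_smul_sub_smul, hdu, hdv, zero_smul, zero_smul, sub_zero]
  have hpar := crossProduct_ne_zero_iff_linearIndependent.not.1 (not_not.2 hdep)
  rw [LinearIndependent.pair_iff' hcross, not_forall_not] at hpar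
  obtain ⟨c, hc⟩ := hpar
  refine ⟨-c, ?_⟩
  have hd (i : Fin 3) : d i = c * (coords u ⨯₃ coords v) i := by rw [← hc]; rfl
  rw [hcomm]
  ext i j
  fin_cases i <;> fin_cases j
  · simpa [d] using hd 0
  · simpa [d] using hd 1
  · simpa [d] using hd 2
  · simpa [d, hD] using hd 0

theorem det_add_smul_of_trace_eq_zero (x : SL(2, F)) {N : Matrix (Fin 2) (Fin 2) F}
    (hN : N.trace = 0) (l : F) :
    (x.1 + l • N).det = 1 - l * (x.1 * N).trace + l ^ 2 * N.det := by
  have hx := x.det_coe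
  rw [det_fin_two] at hx
  simp only [det_fin_two, trace_fin_two, Matrix.mul_apply, Fin.sum_univ_two, Matrix.add_apply,
    Matrix.smul_apply, smul_eq_mul] at hN ⊢
  linear_combination hx + l * (x.1 0 0 + x.1 1 1) * hN

theorem not_commute_mul_of_trace_eq {x y z : SL(2, F)} (hy : y.1.trace = x.1.trace)
    (hz : z.1.trace = x.1.trace) (hx : x.1.trace ≠ 0) (hxy : (x * y).1.trace ≠ 2)
    (hzx : z ≠ x⁻¹) (hzy : z ≠ y) : ¬ Commute (x * y) (x * z) := by
  intro hc
  have hns : x * y ∉ Subgroup.center SL(2, F) := by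
    intro hmem
    obtain ⟨r, -, hr⟩ := mem_center_iff.1 hmem
    have hyr : y.1 = r • (x⁻¹).1 := by
      rw [← inv_mul_cancel_left x y, Matrix.SpecialLinearGroup.coe_mul, ← hr,
        scalar_apply, ← smul_one_eq_diagonal, Matrix.mul_smul, mul_one]
    rw [hyr, trace_smul, trace_inv, smul_eq_mul, mul_eq_right₀ hx] at hy
    apply hxy
    simp [← hr, hy]
  obtain ⟨a, b, hab⟩ := exists_eq_smul_one_add_smul_of_commute hns hc
  have hzab : z.1 = a • (x⁻¹).1 + b • y.1 := by
    rw [← inv_mul_cancel_left x z, Matrix.SpecialLinearGroup.coe_mul, hab, mul_add, Matrix.mul_smul,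
      Matrix.mul_smul, ← Matrix.SpecialLinearGroup.coe_mul, inv_mul_cancel_left, mul_one]
  have ha : a = 1 - b := by
    have h := congrArg trace hzab
    rw [trace_add, trace_smul, trace_smul, trace_inv, hy, hz, smul_eq_mul, smul_eq_mul] at h
    exact mul_right_cancel₀ hx (by linear_combination -h)
  have hdet : a ^ 2 + a * b * (x * y).1.trace + b ^ 2 = 1 := by
    rw [← det_smul_one_add_smul, ← hab, Matrix.SpecialLinearGroup.det_coe]
  have hb : b * (1 - b) = 0 := by
    apply mul_right_cancel₀ (sub_ne_zero.2 hxy)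
    rw [ha] at hdet
    linear_combination hdet
  rcases mul_eq_zero.1 hb with rfl | hb
  · exact hzx (Subtype.ext (by rw [hzab, ha]; simp))
  · obtain rfl : b = 1 := (sub_eq_zero.1 hb).symm
    exact hzy (Subtype.ext (by rw [hzab, ha]; simp))

/-- The elements `x` such that `x`, `x⁻¹ * u` and `x⁻¹ * v` all have trace `t`, that is, the fibre
over `(u, v)` of `(x, y, z) ↦ (x * y, x * z)` on triples of elements of trace `t`. -/
def traceFibre (t : F) (u v : SL(2, F)) : Set SL(2, F) :=
  {x | x.1.trace = t ∧ (x⁻¹ * u).1.trace = t ∧ (x⁻¹ * v).1.trace = t}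

section TraceFibre

variable {t : F} {u v x x' : SL(2, F)}

theorem exists_eq_add_smul_of_mem_traceFibre (huv : ¬ Commute u v) (hx : x ∈ traceFibre t u v)
    (hx' : x' ∈ traceFibre t u v) : ∃ l : F, x'.1 = x.1 + l • (u.1 * v.1 - v.1 * u.1) := by
  obtain ⟨ht, hu, hv⟩ := hx
  obtain ⟨ht', hu', hv'⟩ := hx'
  rw [trace_inv_mul, Matrix.SpecialLinearGroup.coe_mul] at hu hv hu' hv'
  have hne : u.1 * v.1 ≠ v.1 * u.1 := fun h ↦ huv (Subtype.ext h)
  obtain ⟨l, hl⟩ := exists_eq_smul_commutator (D := x'.1 - x.1) hne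
    (by rw [trace_sub, ht, ht', sub_self])
    (by rw [sub_mul, trace_sub]; linear_combination hu - hu' + u.1.trace * (ht' - ht))
    (by rw [sub_mul, trace_sub]; linear_combination hv - hv' + v.1.trace * (ht' - ht))
  exact ⟨l, by rw [← hl, add_sub_cancel]⟩

theorem trace_mul_eq_mul_det_of_eq_add_smul {N : Matrix (Fin 2) (Fin 2) F} (hN : N.trace = 0)
    {l : F} (hx' : x'.1 = x.1 + l • N) (hne : x' ≠ x) : (x.1 * N).trace = l * N.det := by
  have hl : l ≠ 0 := by
    rintro rfl
    exact hne (Subtype.ext (by rw [hx', zero_smul, add_zero]))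
  have hdet := det_add_smul_of_trace_eq_zero x hN l
  rw [← hx', Matrix.SpecialLinearGroup.det_coe] at hdet
  exact mul_left_cancel₀ hl (by linear_combination hdet)

-- A third point of the fibre would make the commutator of `u` and `v` nilpotent, and its kernel
-- would be an eigenline common to `x` and `u`.
theorem eq_of_mem_traceFibre {x'' : SL(2, F)} (ht : t ≠ 0) (hx : x ∈ traceFibre t u v)
    (hx' : x' ∈ traceFibre t u v) (hx'' : x'' ∈ traceFibre t u v) (hu : u.1.trace ≠ 2)
    (hxu : (x * (x⁻¹ * u)⁻¹).1.trace ≠ 2) (hv : v ≠ 1) (hvu : v ≠ u) (hne' : x' ≠ x)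
    (hne'' : x'' ≠ x) : x'' = x' := by
  have huv : ¬ Commute u v := by
    have := not_commute_mul_of_trace_eq (hx.2.1.trans hx.1.symm) (hx.2.2.trans hx.1.symm)
      (hx.1.trans_ne ht)
    simp only [mul_inv_cancel_left, ne_eq, mul_eq_left, mul_right_inj] at this
    exact this hu hv hvu
  obtain ⟨l', hl'⟩ := exists_eq_add_smul_of_mem_traceFibre huv hx hx'
  obtain ⟨l'', hl''⟩ := exists_eq_add_smul_of_mem_traceFibre huv hx hx''
  set N := u.1 * v.1 - v.1 * u.1 with hN
  have htrN : N.trace = 0 := by rw [hN, trace_sub, trace_mul_comm, sub_self]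
  have htr' := trace_mul_eq_mul_det_of_eq_add_smul htrN hl' hne'
  have htr'' := trace_mul_eq_mul_det_of_eq_add_smul htrN hl'' hne''
  by_contra hne
  have hdetN : N.det = 0 := by
    by_contra hdet
    obtain rfl := mul_right_cancel₀ hdet (htr'.symm.trans htr'')
    exact hne (Subtype.ext (hl''.trans hl'.symm))
  have hN0 : N ≠ 0 := fun h ↦ huv (Subtype.ext (sub_eq_zero.1 h))
  obtain ⟨w, hw, c, hc, hcN⟩ := exists_eq_smul_squareZero hN0 htrN hdetN
  have hstab {g : SL(2, F)} (hg : (g.1 * N).trace = 0) : g ∈ lineStabilizer w := by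
    rw [hcN, Matrix.mul_smul, trace_smul, trace_mul_squareZero, smul_eq_mul] at hg
    exact (mem_lineStabilizer_iff_wedge_eq_zero hw).2 ((mul_eq_zero.1 hg).resolve_left hc)
  have hxw : x ∈ lineStabilizer w := hstab (by rw [htr', hdetN, mul_zero])
  have huw : u ∈ lineStabilizer w :=
    hstab (by rw [hN, mul_sub, trace_sub, ← mul_assoc, ← mul_assoc, trace_mul_cycle u.1 v.1,
      sub_self])
  rcases trace_mul_eq_two_of_mem_lineStabilizer hw hxw (mul_mem (inv_mem hxw) huw)
    (hx.1.trans hx.2.1.symm) with h | h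
  · exact hu (by rwa [mul_inv_cancel_left] at h)
  · exact hxu h

end TraceFibre

theorem conj_squareZero (a : SL(2, F)) (v : Fin 2 → F) :
    a.1 * squareZero v * (a⁻¹).1 = squareZero (a • v) := by
  ext i j
  fin_cases i <;> fin_cases j <;>
    simp [squareZero, Matrix.mul_apply, adjugate_fin_two, specialLinear_smul_apply] <;> ring

theorem exists_forall_trace_mul_conj_ne_two {g : SL(2, F)} {e : F} (he : e ^ 2 = 1)
    (htr : g.1.trace = 2 * e) (hg : g ∉ Subgroup.center SL(2, F)) :
    ∃ v ≠ 0, ∀ a ∉ lineStabilizer v, (g * (a * g * a⁻¹)).1.trace ≠ 2 := by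
  have hne : g.1 ≠ e • 1 := by
    rw [smul_one_eq_diagonal]
    exact fun h ↦ hg (mem_center_iff.2 ⟨e, he, h.symm⟩)
  obtain ⟨v, hv, c, hc, hgv⟩ := exists_eq_smul_one_add_smul_squareZero he htr hne
  refine ⟨v, hv, fun a ha htwo ↦ ha ?_⟩
  have hconj : (a * g * a⁻¹).1 = e • 1 + c • squareZero (a • v) := by
    have hinv : a.1 * (a⁻¹).1 = 1 := by rw [← Matrix.SpecialLinearGroup.coe_mul]; simp
    rw [← conj_squareZero, Matrix.SpecialLinearGroup.coe_mul, Matrix.SpecialLinearGroup.coe_mul,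
      hgv, mul_add, add_mul, Matrix.mul_smul, Matrix.mul_smul, mul_one, Matrix.smul_mul,
      Matrix.smul_mul, hinv]
  have htrace : (g * (a * g * a⁻¹)).1.trace = 2 - (c * wedge (a • v) v) ^ 2 := by
    have hcross : wedge (wedge (a • v) v • v) (a • v) = -wedge (a • v) v ^ 2 := by
      simp only [wedge, Pi.smul_apply, smul_eq_mul]
      ring
    rw [Matrix.SpecialLinearGroup.coe_mul, hconj, hgv, add_mul, mul_add, mul_add]
    simp only [trace_add, trace_smul, Matrix.smul_mul, Matrix.mul_smul, one_mul, mul_one,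
      trace_squareZero, trace_one, trace_mul_squareZero, squareZero_mulVec, hcross,
      Fintype.card_fin, smul_eq_mul]
    linear_combination 2 * he
  rw [mem_lineStabilizer_iff_wedge_eq_zero hv]
  rw [htrace, sub_eq_self, sq_eq_zero_iff] at htwo
  exact (mul_eq_zero.1 htwo).resolve_left hc

end SpecialLinearTwo

section Powers

variable {G : Type*} [Group G] [DecidableEq G] {A : Finset G} {x y : G} {m n k : ℕ}

theorem mul_mem_pow_of_add_eq (hk : m + n = k) (hx : x ∈ A ^ m) (hy : y ∈ A ^ n) :
    x * y ∈ A ^ k := by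
  rw [← hk, pow_add]
  exact mul_mem_mul hx hy

theorem inv_mem_pow_of_inv_eq (hA : A⁻¹ = A) (hx : x ∈ A ^ n) : x⁻¹ ∈ A ^ n := by
  rw [← hA, inv_pow]
  exact inv_mem_inv hx

theorem conj_mem_pow_of_inv_eq (hA : A⁻¹ = A) (hk : n + 2 = k) (hx : x ∈ A) (hy : y ∈ A ^ n) :
    x * y * x⁻¹ ∈ A ^ k := by
  rw [← pow_one A] at hx
  refine mul_mem_pow_of_add_eq ?_ (mul_mem_pow_of_add_eq rfl hx hy) (inv_mem_pow_of_inv_eq hA hx)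
  rw [← hk, add_comm 1 n]

end Powers

section Triples

variable {α : Type*} [DecidableEq α] {B : Finset α} {r : α → α → Prop} [DecidableRel r]
  {e : α → α → Finset α} {m k : ℕ}

theorem pow_three_card_le_card_filter_add (hr : ∀ x ∈ B, #{y ∈ B | r x y} ≤ m)
    (he : ∀ x y, #(e x y) ≤ k) :
    #B ^ 3 ≤ #{q ∈ B ×ˢ B ×ˢ B | ¬ r q.1 q.2.1 ∧ q.2.2 ∉ e q.1 q.2.1} + (m + k) * #B ^ 2 := by
  have hz (x y : α) : #B ≤
      #{z ∈ B | ¬ r x y ∧ z ∉ e x y} + ((if r x y then 1 else 0) * #B + k) := by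
    split_ifs with hxy
    · lia
    · simp only [hxy, not_false_iff, true_and]
      rw [filter_notMem_eq_sdiff]
      have := le_card_sdiff (e x y) B
      have := he x y
      lia
  have hx (x : α) (hxB : x ∈ B) :
      #B ^ 2 ≤ #{q ∈ B ×ˢ B | ¬ r x q.1 ∧ q.2 ∉ e x q.1} + (m + k) * #B := by
    calc #B ^ 2 = ∑ _y ∈ B, #B := by rw [sum_const, smul_eq_mul, sq]
      _ ≤ ∑ y ∈ B, (#{z ∈ B | ¬ r x y ∧ z ∉ e x y} + ((if r x y then 1 else 0) * #B + k)) :=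
        sum_le_sum fun y _ ↦ hz x y
      _ = #{q ∈ B ×ˢ B | ¬ r x q.1 ∧ q.2 ∉ e x q.1} + (#{y ∈ B | r x y} * #B + #B * k) := by
        rw [sum_add_distrib, sum_add_distrib, sum_const, smul_eq_mul, ← sum_mul, ← card_filter,
          card_filter_product_eq_sum B B fun y z ↦ ¬ r x y ∧ z ∉ e x y]
      _ ≤ _ := by nlinarith [hr x hxB]
  calc #B ^ 3 = ∑ _x ∈ B, #B ^ 2 := by rw [sum_const, smul_eq_mul]; ring
    _ ≤ ∑ x ∈ B, (#{q ∈ B ×ˢ B | ¬ r x q.1 ∧ q.2 ∉ e x q.1} + (m + k) * #B) := sum_le_sum hx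
    _ = _ := by
      rw [sum_add_distrib, sum_const, smul_eq_mul,
        card_filter_product_eq_sum B (B ×ˢ B) fun x q ↦ ¬ r x q.1 ∧ q.2 ∉ e x q.1]
      ring

theorem pow_three_le_of_pow_three_le_add {b N : ℕ} (hN : 1 ≤ N)
    (h : b ^ 3 ≤ 2 * N ^ 2 + (2 * Nat.sqrt (4 * N) + 2) * b ^ 2) : b ^ 3 ≤ 1728 * N ^ 2 := by
  set S := Nat.sqrt (4 * N)
  have hS : S ^ 2 ≤ 4 * N := Nat.sqrt_le' _
  have hS2 : 2 ≤ S := Nat.le_sqrt'.2 (by lia)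
  rcases le_total (4 * S + 4) b with hb | hb
  · have := Nat.mul_le_mul_right (b ^ 2) hb
    lia
  · calc b ^ 3 ≤ (6 * S) ^ 3 := Nat.pow_le_pow_left (by lia) 3
      _ = 108 * (2 * S ^ 3) := by ring
      _ ≤ 108 * (S * S ^ 3) := by gcongr
      _ = 108 * (S ^ 2) ^ 2 := by ring
      _ ≤ 108 * (4 * N) ^ 2 := by gcongr
      _ = 1728 * N ^ 2 := by ring

end Triples

section ConjugacyClasses

variable {F : Type*} [Field F] [DecidableEq F] {A : Finset SL(2, F)} {n : ℕ}

-- If `a` moves the line of `v`, then only the identity fixes both `v` and `a • v`.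
theorem sq_card_filter_smul_eq_le (hinv : A⁻¹ = A) (hgen : Subgroup.closure (A : Set SL(2, F)) = ⊤)
    {v : Fin 2 → F} (hv : v ≠ 0) : #{g ∈ A ^ n | g • v = v} ^ 2 ≤ #(A ^ (2 * n + 2)) := by
  obtain ⟨a, ha, hav⟩ := exists_mem_notMem_lineStabilizer hgen hv
  rw [mem_lineStabilizer_iff_wedge_eq_zero hv] at hav
  rw [sq, ← card_product]
  apply card_le_card_of_injOn fun q ↦ q.1 * (a * q.2 * a⁻¹)
  · rintro ⟨g, h⟩ hgh
    simp only [coe_product, Set.mem_prod, mem_coe, mem_filter] at hgh ⊢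
    exact mul_mem_pow_of_add_eq (by ring) hgh.1.1 (conj_mem_pow_of_inv_eq hinv rfl ha hgh.2.1)
  · rintro ⟨g, h⟩ hgh ⟨g', h'⟩ hgh' heq
    simp only [coe_product, Set.mem_prod, mem_coe, mem_filter] at hgh hgh' heq
    have hquot : g'⁻¹ * g = a * (h' * h⁻¹) * a⁻¹ := by
      rw [inv_mul_eq_iff_eq_mul, eq_mul_inv_iff_mul_eq.2 heq]
      group
    have hfix : (g'⁻¹ * g) • v = v := by rw [mul_smul, hgh.1.2, inv_smul_eq_iff, hgh'.1.2]
    have hfix' : (g'⁻¹ * g) • a • v = a • v := by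
      rw [hquot, smul_smul, inv_mul_cancel_right, mul_smul, mul_smul,
        inv_smul_eq_iff.2 hgh.2.2.symm, hgh'.2.2]
    have hg : g'⁻¹ * g = 1 := eq_one_of_smul_eq_of_smul_eq hfix' hfix hav
    have hh : h' * h⁻¹ = 1 := by rwa [hg, eq_comm, conj_eq_one_iff] at hquot
    exact Prod.ext (inv_mul_eq_one.1 hg).symm (mul_inv_eq_one.1 hh).symm

theorem sq_card_filter_trace_mul_eq_two_le (hinv : A⁻¹ = A)
    (hgen : Subgroup.closure (A : Set SL(2, F)) = ⊤) {x : SL(2, F)} (hx : x ∈ A ^ n)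
    (hxc : x ∉ Subgroup.center SL(2, F)) :
    #{y ∈ A ^ n | y.1.trace = x.1.trace ∧ (x * y).1.trace = 2} ^ 2 ≤ 4 * #(A ^ (4 * n + 2)) := by
  obtain ⟨v, hv, w, hw, hvw⟩ := exists_eigenlines hxc
  have hfix_of_wedge {g : SL(2, F)} {u u' : Fin 2 → F} (hu : u ≠ 0) (hg : g • u = u)
      (hpar : wedge u u' = 0) : g • u' = u' := by
    obtain ⟨c, rfl⟩ := exists_eq_smul_of_wedge_eq_zero hu (by rw [wedge_comm, hpar, neg_zero])
    rw [smul_comm, hg]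
  have hsub : #{y ∈ A ^ n | y.1.trace = x.1.trace ∧ (x * y).1.trace = 2} ≤
      #({g ∈ A ^ (2 * n) | g • v = v} ∪ {g ∈ A ^ (2 * n) | g • w = w}) := by
    apply card_le_card_of_injOn (x * ·) _ (mul_right_injective x).injOn
    intro y hy
    simp only [mem_coe, mem_filter, mem_union] at hy ⊢
    have hmem : x * y ∈ A ^ (2 * n) := mul_mem_pow_of_add_eq (by ring) hx hy.1
    by_cases hxy : x * y = 1
    · exact .inl ⟨hmem, by rw [hxy, one_smul]⟩
    · obtain ⟨u, hu, hxu, hfix⟩ := exists_eigenvector_fixed_by_mul hy.2.1.symm hy.2.2 hxy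
      exact (hvw u hu hxu).imp (⟨hmem, hfix_of_wedge hu hfix ·⟩) (⟨hmem, hfix_of_wedge hu hfix ·⟩)
  have hcard := hsub.trans (card_union_le _ _)
  have hboundv := sq_card_filter_smul_eq_le (n := 2 * n) hinv hgen hv
  have hboundw := sq_card_filter_smul_eq_le (n := 2 * n) hinv hgen hw
  rw [show 2 * (2 * n) + 2 = 4 * n + 2 by ring] at hboundv hboundw
  exact (Nat.pow_le_pow_left hcard 2).trans (add_sq_le.trans (by lia))

theorem card_filter_triples_le {B : Finset SL(2, F)} {t : F} (ht : t ≠ 0)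
    (hB : ∀ x ∈ B, x.1.trace = t) :
    #{q ∈ B ×ˢ B ×ˢ B | ¬ ((q.1 * q.2.1).1.trace = 2 ∨ (q.1 * q.2.1⁻¹).1.trace = 2) ∧
      q.2.2 ∉ ({q.1⁻¹, q.2.1} : Finset SL(2, F))} ≤ 2 * #(B * B) ^ 2 := by
  rw [sq (#(B * B)), ← card_product]
  apply card_le_mul_card_image_of_maps_to (f := fun q ↦ (q.1 * q.2.1, q.1 * q.2.2))
  · rintro ⟨x, y, z⟩ hq
    simp only [mem_filter, mem_product] at hq ⊢
    exact ⟨mul_mem_mul hq.1.1 hq.1.2.1, mul_mem_mul hq.1.1 hq.1.2.2⟩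
  · rintro ⟨u, v⟩ -
    by_contra! hcard
    have hfibre {x y z : SL(2, F)} (hq : x ∈ B ∧ y ∈ B ∧ z ∈ B) (hu : x * y = u) (hv : x * z = v) :
        x ∈ traceFibre t u v :=
      ⟨hB x hq.1, by rw [← hu, inv_mul_cancel_left, hB y hq.2.1],
        by rw [← hv, inv_mul_cancel_left, hB z hq.2.2]⟩
    obtain ⟨⟨x, y, z⟩, hq, ⟨x', y', z'⟩, hq', ⟨x'', y'', z''⟩, hq'', hne', hne'', hne⟩ :=
      two_lt_card.1 hcard
    simp only [mem_filter, mem_product, Prod.mk.injEq, mem_insert, mem_singleton, not_or]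
      at hq hq' hq''
    obtain ⟨⟨hmem, ⟨hxy, hxy'⟩, hzx, hzy⟩, hu, hv⟩ := hq
    obtain ⟨⟨hmem', -⟩, hu', hv'⟩ := hq'
    obtain ⟨⟨hmem'', -⟩, hu'', hv''⟩ := hq''
    have hx : x'' = x' := by
      apply eq_of_mem_traceFibre ht (hfibre hmem hu hv) (hfibre hmem' hu' hv')
        (hfibre hmem'' hu'' hv'')
      · rwa [← hu]
      · rwa [← hu, inv_mul_cancel_left]
      · rwa [← hv, ne_eq, mul_eq_one_iff_eq_inv']
      · rwa [← hu, ← hv, ne_eq, mul_right_inj]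
      · rintro rfl
        obtain rfl := mul_left_cancel (hu.trans hu'.symm)
        obtain rfl := mul_left_cancel (hv.trans hv'.symm)
        exact hne' rfl
      · rintro rfl
        obtain rfl := mul_left_cancel (hu.trans hu''.symm)
        obtain rfl := mul_left_cancel (hv.trans hv''.symm)
        exact hne'' rfl
    subst hx
    obtain rfl := mul_left_cancel (hu'.trans hu''.symm)
    obtain rfl := mul_left_cancel (hv'.trans hv''.symm)
    exact hne rfl

theorem pow_three_card_filter_trace_eq_le (hone : 1 ∈ A) (hinv : A⁻¹ = A)
    (hgen : Subgroup.closure (A : Set SL(2, F)) = ⊤) {t : F} (ht0 : t ≠ 0) (ht : t ^ 2 ≠ 4) :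
    #{y ∈ A ^ n | y.1.trace = t} ^ 3 ≤ 1728 * #(A ^ (4 * n + 2)) ^ 2 := by
  set B : Finset SL(2, F) := {y ∈ A ^ n | y.1.trace = t} with hB
  set N := #(A ^ (4 * n + 2))
  set S := Nat.sqrt (4 * N) with hS
  have hmul (x : SL(2, F)) (hx : x ∈ B) : #{y ∈ B | (x * y).1.trace = 2} ≤ S := by
    rw [mem_filter] at hx
    rw [hS, Nat.le_sqrt', hB, filter_filter, ← hx.2]
    exact sq_card_filter_trace_mul_eq_two_le hinv hgen hx.1 fun hc ↦
      ht (hx.2 ▸ trace_sq_eq_four_of_mem_center hc)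
  have hmul_inv (x : SL(2, F)) (hx : x ∈ B) : #{y ∈ B | (x * y⁻¹).1.trace = 2} ≤ S := by
    refine (card_le_card_of_injOn (·⁻¹) (fun y hy ↦ ?_) inv_injective.injOn).trans (hmul x hx)
    simp only [mem_coe, hB, mem_filter] at hy ⊢
    exact ⟨⟨inv_mem_pow_of_inv_eq hinv hy.1.1, by rw [trace_inv, hy.1.2]⟩, hy.2⟩
  have htriples := pow_three_card_le_card_filter_add (B := B) (m := S + S) (k := 2)
    (r := fun x y ↦ (x * y).1.trace = 2 ∨ (x * y⁻¹).1.trace = 2) (e := fun x y ↦ {x⁻¹, y})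
    (fun x hx ↦ by
      rw [filter_or]
      exact (card_union_le _ _).trans (add_le_add (hmul x hx) (hmul_inv x hx)))
    fun x y ↦ card_le_two
  have hgood := card_filter_triples_le ht0 (B := B) fun x hx ↦ (mem_filter.1 hx).2
  have hBB : #(B * B) ≤ N := by
    refine card_le_card ((mul_subset_mul (filter_subset _ _) (filter_subset _ _)).trans ?_)
    rw [← pow_add]
    exact Finset.pow_subset_pow_right hone (by lia)
  have hN : 1 ≤ N := card_pos.2 ⟨1, one_mem_pow hone⟩
  refine pow_three_le_of_pow_three_le_add hN (htriples.trans ?_)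
  rw [two_mul (Nat.sqrt _)]
  gcongr
  exact hgood.trans (by gcongr)

end ConjugacyClasses

theorem conj_eq_or_eq_inv_of_closure_eq_top {G : Type*} [Group G] {S : Set G} {a : G}
    (hS : ∀ c ∈ S, c * a * c⁻¹ = a ∨ c * a * c⁻¹ = a⁻¹) (hgen : Subgroup.closure S = ⊤) (g : G) :
    g * a * g⁻¹ = a ∨ g * a * g⁻¹ = a⁻¹ := by
  let H : Subgroup G :=
    (MulAction.stabilizer (ConjAct G) ({a, a⁻¹} : Set G)).comap ConjAct.toConjAct.toMonoidHom
  have hSH : S ⊆ H := by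
    intro c hc
    have hpair : ConjAct.toConjAct c • ({a, a⁻¹} : Set G) =
        {c * a * c⁻¹, (c * a * c⁻¹)⁻¹} := by
      rw [Set.smul_set_insert, Set.smul_set_singleton, smul_inv', ConjAct.toConjAct_smul]
    change ConjAct.toConjAct c • ({a, a⁻¹} : Set G) = {a, a⁻¹}
    rcases hS c hc with h | h
    · rw [hpair, h]
    · rw [hpair, h, inv_inv, Set.pair_comm]
  have hg : g ∈ H := (hgen ▸ (Subgroup.closure_le H).2 hSH) (Subgroup.mem_top g)
  have hga := (Set.ext_iff.1 hg (ConjAct.toConjAct g • a)).1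
    (Set.smul_mem_smul_set (Set.mem_insert a _))
  simpa [ConjAct.toConjAct_smul] using hga

section Pivoting

variable {F : Type*} [Field F]

theorem conj_eq_inv_of_trace_eq_zero {a c : SL(2, F)} (hc : c.1.trace = 0)
    (hac : (a * c).1.trace = 0) : c * a * c⁻¹ = a⁻¹ := by
  have hc' := coe_inv_eq_trace_smul_one_sub c
  have hac' := coe_inv_eq_trace_smul_one_sub (a * c)
  rw [hc, zero_smul, zero_sub] at hc'
  rw [hac, zero_smul, zero_sub, _root_.mul_inv_rev, Matrix.SpecialLinearGroup.coe_mul, hc',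
    Matrix.SpecialLinearGroup.coe_mul, neg_mul, neg_inj] at hac'
  have h : c * a⁻¹ = a * c := Subtype.ext hac'
  rw [mul_inv_eq_iff_eq_mul, eq_inv_mul_iff_mul_eq, ← mul_assoc, ← h, inv_mul_cancel_right]

theorem exists_conj_ne_and_conj_ne_inv (h2 : (2 : F) ≠ 0) {a : SL(2, F)} (ha : a.1 1 0 ≠ 0) :
    ∃ u : SL(2, F), u * a * u⁻¹ ≠ a ∧ u * a * u⁻¹ ≠ a⁻¹ := by
  refine ⟨transvection (zero_ne_one : (0 : Fin 2) ≠ 1) 1, fun h ↦ ha ?_, fun h ↦ ha ?_⟩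
  · have h00 := congrArg (fun g : SL(2, F) ↦ g.1 0 0) (mul_inv_eq_iff_eq_mul.1 h)
    simpa [Matrix.mul_apply, transvection_coe, Matrix.transvection, Fin.sum_univ_two] using h00
  · have h10 := congrArg (fun g : SL(2, F) ↦ g.1 1 0) (mul_inv_eq_iff_eq_mul.1 h)
    simpa [Matrix.mul_apply, transvection_coe, Fin.sum_univ_two,
      Matrix.adjugate_fin_two, eq_neg_iff_add_eq_zero, ← two_mul, h2] using h10

variable [DecidableEq F] {A : Finset SL(2, F)}

theorem exists_trace_ne_of_unipotent (h2 : (2 : F) ≠ 0) (h3 : (3 : F) ≠ 0) (hinv : A⁻¹ = A)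
    (hgen : Subgroup.closure (A : Set SL(2, F)) = ⊤) {g : SL(2, F)} (hg : g ∈ A ^ 2)
    (ht : g.1.trace ^ 2 = 4) (hgc : g ∉ Subgroup.center SL(2, F)) :
    ∃ w ∈ A ^ 6, w.1.trace ≠ 0 ∧ w.1.trace ^ 2 ≠ 4 := by
  have he : (g.1.trace / 2) ^ 2 = 1 := by
    rw [div_pow, ht, div_eq_one_iff_eq (pow_ne_zero 2 h2)]
    norm_num
  obtain ⟨v, hv, hne⟩ := exists_forall_trace_mul_conj_ne_two he (mul_div_cancel₀ _ h2).symm hgc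
  obtain ⟨a, ha, hav⟩ := exists_mem_notMem_lineStabilizer hgen hv
  have hconj : a * g * a⁻¹ ∈ A ^ 4 := conj_mem_pow_of_inv_eq hinv rfl ha hg
  have hsum : (g * (a * g * a⁻¹)⁻¹).1.trace = 4 - (g * (a * g * a⁻¹)).1.trace := by
    have h := trace_inv_mul (a * g * a⁻¹) g
    rw [Matrix.SpecialLinearGroup.coe_mul, Matrix.trace_mul_comm,
      ← Matrix.SpecialLinearGroup.coe_mul, trace_mul_mul_inv, ← sq, ht] at h
    rw [h, Matrix.SpecialLinearGroup.coe_mul, Matrix.trace_mul_comm,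
      ← Matrix.SpecialLinearGroup.coe_mul]
  by_contra! hcon
  have h₁ := hcon _ (mul_mem_pow_of_add_eq rfl hg hconj)
  have h₂ := hcon _ (mul_mem_pow_of_add_eq rfl hg (inv_mem_pow_of_inv_eq hinv hconj))
  rw [hsum] at h₂
  have hs := hne a hav
  generalize (g * (a * g * a⁻¹)).1.trace = s at h₁ h₂ hs
  have hs_cases : s = 0 ∨ s = -2 := by grind
  have h4 : (2 : F) * 2 ≠ 0 := mul_ne_zero h2 h2
  rcases hs_cases with rfl | rfl
  · have h := h₂ fun h ↦ h4 (by linear_combination h)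
    exact mul_ne_zero h4 h3 (by linear_combination h)
  · have h := h₂ fun h ↦ mul_ne_zero h2 h3 (by linear_combination h)
    exact pow_ne_zero 5 h2 (by linear_combination h)

theorem exists_trace_ne_of_closure_eq_top (h2 : (2 : F) ≠ 0) (h3 : (3 : F) ≠ 0) (hone : 1 ∈ A)
    (hinv : A⁻¹ = A) (hgen : Subgroup.closure (A : Set SL(2, F)) = ⊤) :
    ∃ w ∈ A ^ 6, w.1.trace ≠ 0 ∧ w.1.trace ^ 2 ≠ 4 := by
  by_contra! hcon
  have hdich (c) (hc : c ∈ A ^ 2) : c.1.trace = 0 ∨ c ∈ Subgroup.center SL(2, F) := by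
    by_contra! h
    obtain ⟨w, hw, hw0, hw4⟩ := exists_trace_ne_of_unipotent h2 h3 hinv hgen hc
      (hcon c (pow_subset_pow_right hone (by norm_num) hc) h.1) h.2
    exact hw4 (hcon w hw hw0)
  have hsub (c) (hc : c ∈ A) : c ∈ A ^ 2 := by
    simpa using pow_subset_pow_right hone (by norm_num : 1 ≤ 2) ((pow_one A).symm ▸ hc)
  obtain ⟨a, ha, ha10⟩ := exists_mem_notMem_lineStabilizer hgen
    (v := ![1, 0]) (by simp)
  have ha10 : a.1 1 0 ≠ 0 := by
    rw [mem_lineStabilizer_iff_wedge_eq_zero (by simp)] at ha10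
    simpa [wedge, specialLinear_smul_apply] using ha10
  obtain ⟨u, hu, hu'⟩ := exists_conj_ne_and_conj_ne_inv h2 ha10
  refine (conj_eq_or_eq_inv_of_closure_eq_top (fun c hc ↦ ?_) hgen u).elim hu hu'
  have hac : a * c ∈ A ^ 2 := by
    rw [sq]
    exact mul_mem_mul ha hc
  rcases hdich c (hsub c hc) with hc0 | hcc
  · rcases hdich _ hac with hac0 | hacc
    · exact Or.inr (conj_eq_inv_of_trace_eq_zero hc0 hac0)
    · left
      have h := Subgroup.mem_center_iff.1 hacc a
      rw [mul_assoc, mul_right_inj] at h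
      rw [← h, mul_inv_cancel_right]
  · left
    rw [← Subgroup.mem_center_iff.1 hcc a, mul_inv_cancel_right]

end Pivoting

section Centralizers

variable {G : Type*} [Group G] [DecidableEq G] {A : Finset G}

/-- The elements of the finite set `A` that commute with `h`. -/
def centralizerIn (A : Finset G) (h : G) : Finset G := {w ∈ A | w * h = h * w}

theorem mem_centralizerIn {h w : G} : w ∈ centralizerIn A h ↔ w ∈ A ∧ Commute w h :=
  mem_filter

theorem card_filter_conj_eq_le (hinv : A⁻¹ = A) (w b : G) :
    #{a ∈ A | a * w * a⁻¹ = b} ≤ #(centralizerIn (A ^ 2) w) := by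
  rcases ({a ∈ A | a * w * a⁻¹ = b}).eq_empty_or_nonempty with h | ⟨a₀, ha₀⟩
  · simp [h]
  rw [mem_filter] at ha₀
  refine card_le_card_of_injOn (a₀⁻¹ * ·) (fun a ha ↦ ?_) (mul_right_injective a₀⁻¹).injOn
  rw [mem_coe, mem_filter] at ha
  rw [mem_coe, mem_centralizerIn, sq]
  refine ⟨mul_mem_mul (hinv ▸ inv_mem_inv ha₀.1) ha.1, ?_⟩
  have h : a * w = b * a := mul_inv_eq_iff_eq_mul.1 ha.2
  change a₀⁻¹ * a * w = w * (a₀⁻¹ * a)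
  rw [mul_assoc, h, ← ha₀.2]
  group

theorem card_centralizerIn_pow_mul_card_le (hinv : A⁻¹ = A) (m : ℕ) (h : G) :
    #(centralizerIn (A ^ m) h) * #A ≤ #(centralizerIn (A ^ 2) h) * #(A ^ (m + 1)) := by
  rw [← card_product]
  refine card_le_mul_card_image_of_maps_to (f := fun q ↦ q.1 * q.2) (fun q hq ↦ ?_) _ fun b _ ↦ ?_
  · rw [mem_product, mem_centralizerIn] at hq
    rw [pow_succ]
    exact mul_mem_mul hq.1.1 hq.2
  rcases ({q ∈ centralizerIn (A ^ m) h ×ˢ A | q.1 * q.2 = b}).eq_empty_or_nonempty with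
    hemp | ⟨⟨z₀, a₀⟩, hq₀⟩
  · simp [hemp]
  simp only [mem_filter, mem_product, mem_centralizerIn] at hq₀
  obtain ⟨⟨⟨-, hz₀⟩, ha₀⟩, hb⟩ := hq₀
  apply card_le_card_of_injOn fun q ↦ z₀⁻¹ * q.1
  · rintro ⟨z, c⟩ hq
    simp only [mem_coe, mem_filter, mem_product, mem_centralizerIn] at hq ⊢
    refine ⟨?_, hz₀.inv_left.mul_left hq.1.1.2⟩
    have hquot : z₀⁻¹ * z = a₀ * c⁻¹ := by
      rw [inv_mul_eq_iff_eq_mul, ← mul_assoc, hb, eq_mul_inv_iff_mul_eq, hq.2]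
    rw [hquot, sq]
    exact mul_mem_mul ha₀ (hinv ▸ inv_mem_inv hq.1.2)
  · rintro ⟨z, c⟩ hq ⟨z', c'⟩ hq' heq
    simp only [mem_coe, mem_filter] at hq hq' heq
    obtain rfl : z = z' := mul_left_cancel heq
    exact Prod.ext rfl (mul_left_cancel (hq.2.trans hq'.2.symm))

theorem card_centralizerIn_pow_le_conj (hinv : A⁻¹ = A) (m : ℕ) (h : G) {a : G} (ha : a ∈ A) :
    #(centralizerIn (A ^ m) h) ≤ #(centralizerIn (A ^ (m + 2)) (a * h * a⁻¹)) := by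
  refine card_le_card_of_injOn (MulAut.conj a) (fun w hw ↦ ?_) (MulAut.conj a).injective.injOn
  rw [mem_coe, mem_centralizerIn] at hw
  rw [mem_coe, mem_centralizerIn]
  exact ⟨conj_mem_pow_of_inv_eq hinv rfl ha hw.1, hw.2.map (MulAut.conj a)⟩

end Centralizers

section Tori

variable {F : Type*} [Field F]

theorem sq_ne_four_iff {t : F} : t ^ 2 ≠ 4 ↔ t ≠ 2 ∧ t ≠ -2 := by
  rw [show (4 : F) = 2 ^ 2 by norm_num, Ne, sq_eq_sq_iff_eq_or_eq_neg, not_or]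

variable [DecidableEq F]

theorem card_filter_trace_eq_centralizerIn_le_two (h2 : (2 : F) ≠ 0) {h : SL(2, F)}
    (hh : h.1.trace ^ 2 ≠ 4) (B : Finset SL(2, F)) (t : F) :
    #{w ∈ centralizerIn B h | w.1.trace = t} ≤ 2 := by
  rcases ({w ∈ centralizerIn B h | w.1.trace = t}).eq_empty_or_nonempty with hemp | ⟨w, hw⟩
  · simp [hemp]
  suffices h : {w ∈ centralizerIn B h | w.1.trace = t} ⊆ {w, w⁻¹} from
    (card_le_card h).trans card_le_two
  intro v hv
  rw [mem_filter, mem_centralizerIn] at hw hv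
  rw [mem_insert, mem_singleton]
  exact eq_or_eq_inv_of_commute_of_trace_eq h2 hh hw.1.2.symm hv.1.2.symm (hw.2.trans hv.2.symm)

theorem card_centralizerIn_le_add (h2 : (2 : F) ≠ 0) {h : SL(2, F)} (hh : h.1.trace ^ 2 ≠ 4)
    (B : Finset SL(2, F)) (T : Finset F) :
    #(centralizerIn B h) ≤ #{w ∈ centralizerIn B h | w.1.trace ∉ T} + 2 * #T := by
  have hT : #{w ∈ centralizerIn B h | w.1.trace ∈ T} ≤ 2 * #T := by
    refine card_le_mul_card_image_of_maps_to (f := fun w : SL(2, F) ↦ w.1.trace)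
      (fun w hw ↦ (mem_filter.1 hw).2) 2 fun t _ ↦ ?_
    exact (card_le_card (filter_subset_filter _ (filter_subset _ _))).trans
      (card_filter_trace_eq_centralizerIn_le_two h2 hh B t)
  rw [← card_filter_add_card_filter_not (s := centralizerIn B h) fun w ↦ w.1.trace ∈ T]
  lia

theorem card_le_card_centralizerIn_mul {A : Finset SL(2, F)} (hinv : A⁻¹ = A) {n : ℕ}
    {w : SL(2, F)} (hw : w ∈ A ^ n) :
    #A ≤ #(centralizerIn (A ^ 2) w) * #{y ∈ A ^ (n + 2) | y.1.trace = w.1.trace} :=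
  card_le_mul_card_image_of_maps_to (f := fun a ↦ a * w * a⁻¹)
    (fun a ha ↦ mem_filter.2 ⟨conj_mem_pow_of_inv_eq hinv rfl ha hw, trace_mul_mul_inv a w⟩) _
    fun b _ ↦ card_filter_conj_eq_le hinv w b

/-- The torus of elements commuting with `h` is *involved* with `A`: it contains a regular
semisimple element of `A ^ 6` whose trace is nonzero. -/
def TorusInvolved (A : Finset SL(2, F)) (h : SL(2, F)) : Prop :=
  ∃ w ∈ A ^ 6, Commute w h ∧ w.1.trace ≠ 0 ∧ w.1.trace ^ 2 ≠ 4

/-- A finite symmetric generating set of `SL(2, F)` containing `1` whose powers, up to the exponent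
`34` needed in the product theorem, are larger than the set itself by a factor of at most `R`. -/
structure IsGeneratingApproximateGroup (A : Finset SL(2, F)) (R : ℝ) : Prop where
  one_mem : 1 ∈ A
  inv_eq : A⁻¹ = A
  closure_eq_top : Subgroup.closure (A : Set SL(2, F)) = ⊤
  card_pow_le : #(A ^ 34) ≤ R * #A

namespace IsGeneratingApproximateGroup

variable {A : Finset SL(2, F)} {R : ℝ} {h : SL(2, F)}

theorem card_pos (hA : IsGeneratingApproximateGroup A R) : (0 : ℝ) < #A :=
  Nat.cast_pos.2 (Finset.card_pos.2 ⟨1, hA.one_mem⟩)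

theorem card_pow_le_of_le (hA : IsGeneratingApproximateGroup A R) {n : ℕ} (hn : n ≤ 34) :
    #(A ^ n) ≤ R * #A :=
  (Nat.cast_le.2 (card_le_card (pow_subset_pow_right hA.one_mem hn))).trans hA.card_pow_le

theorem one_le (hA : IsGeneratingApproximateGroup A R) : 1 ≤ R := by
  have h := hA.card_pow_le_of_le (n := 1) (by norm_num)
  rw [pow_one] at h
  exact le_of_mul_le_mul_right (by rwa [one_mul]) hA.card_pos

theorem card_le_mul_pow_three_card_centralizerIn (hA : IsGeneratingApproximateGroup A R)
    (hinvolved : TorusInvolved A h) : #A ≤ 1728 * R ^ 2 * #(centralizerIn (A ^ 2) h) ^ 3 := by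
  obtain ⟨w, hw, hwh, hw0, hw4⟩ := hinvolved
  have hsub : centralizerIn (A ^ 2) w ⊆ centralizerIn (A ^ 2) h := by
    intro z hz
    rw [mem_centralizerIn] at hz ⊢
    exact ⟨hz.1, commute_of_commute_of_notMem_center
      (fun hwc ↦ hw4 (trace_sq_eq_four_of_mem_center hwc)) hz.2.symm hwh⟩
  have hfibre : (#A : ℝ) ≤
      #(centralizerIn (A ^ 2) h) * #{y ∈ A ^ 8 | y.1.trace = w.1.trace} := by
    exact_mod_cast (card_le_card_centralizerIn_mul hA.inv_eq hw).trans
      (Nat.mul_le_mul_right _ (card_le_card hsub))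
  have hclass : (#{y ∈ A ^ 8 | y.1.trace = w.1.trace} : ℝ) ^ 3 ≤ 1728 * (R * #A) ^ 2 := by
    refine le_trans ?_ (mul_le_mul_of_nonneg_left
      (pow_le_pow_left₀ (Nat.cast_nonneg _) hA.card_pow_le 2) (by norm_num))
    exact_mod_cast pow_three_card_filter_trace_eq_le (n := 8) hA.one_mem hA.inv_eq
      hA.closure_eq_top hw0 hw4
  have hpos := hA.card_pos
  generalize (#{y ∈ A ^ 8 | y.1.trace = w.1.trace} : ℝ) = b at hfibre hclass
  have hz : (0 : ℝ) ≤ #(centralizerIn (A ^ 2) h) := Nat.cast_nonneg _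
  generalize (#(centralizerIn (A ^ 2) h) : ℝ) = z at hfibre hz ⊢
  refine le_of_mul_le_mul_left ?_ (pow_pos hpos 2)
  calc (#A : ℝ) ^ 2 * #A = #A ^ 3 := by ring
    _ ≤ (z * b) ^ 3 := pow_le_pow_left₀ hpos.le hfibre 3
    _ = z ^ 3 * b ^ 3 := mul_pow z b 3
    _ ≤ z ^ 3 * (1728 * (R * #A) ^ 2) := mul_le_mul_of_nonneg_left hclass (by positivity)
    _ = #A ^ 2 * (1728 * R ^ 2 * z ^ 3) := by ring

theorem lt_card_centralizerIn (hA : IsGeneratingApproximateGroup A R) (hlarge : 373248 * R ^ 5 < #A)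
    (hinvolved : TorusInvolved A h) : 6 * R < #(centralizerIn (A ^ 2) h) := by
  by_contra! hle
  have hR := hA.one_le
  have hcard := calc
    (#A : ℝ) ≤ 1728 * R ^ 2 * #(centralizerIn (A ^ 2) h) ^ 3 :=
      hA.card_le_mul_pow_three_card_centralizerIn hinvolved
    _ ≤ 1728 * R ^ 2 * (6 * R) ^ 3 := by gcongr
    _ = 373248 * R ^ 5 := by ring
  exact hcard.not_gt hlarge

theorem torusInvolved_conj_of_mem (hA : IsGeneratingApproximateGroup A R) (h2 : (2 : F) ≠ 0)
    (hlarge : 373248 * R ^ 5 < #A) (hh : h.1.trace ^ 2 ≠ 4) (hinvolved : TorusInvolved A h)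
    {a : SL(2, F)} (ha : a ∈ A) : TorusInvolved A (a * h * a⁻¹) := by
  have hmul : (#(centralizerIn (A ^ 2) h) : ℝ) * #A ≤
      #(centralizerIn (A ^ 2) (a * h * a⁻¹)) * (R * #A) := calc
    _ ≤ (#(centralizerIn (A ^ 4) (a * h * a⁻¹)) : ℝ) * #A := by
      gcongr ?_ * _
      exact_mod_cast card_centralizerIn_pow_le_conj hA.inv_eq 2 h ha
    _ ≤ #(centralizerIn (A ^ 2) (a * h * a⁻¹)) * #(A ^ 5) := by
      exact_mod_cast card_centralizerIn_pow_mul_card_le hA.inv_eq 4 (a * h * a⁻¹)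
    _ ≤ _ := by
      gcongr
      exact hA.card_pow_le_of_le (by norm_num)
  have hsix : 6 < #(centralizerIn (A ^ 2) (a * h * a⁻¹)) := by
    rw [← mul_assoc] at hmul
    have hlt := (hA.lt_card_centralizerIn hlarge hinvolved).trans_le
      (le_of_mul_le_mul_right hmul hA.card_pos)
    exact_mod_cast lt_of_mul_lt_mul_right hlt (zero_le_one.trans hA.one_le)
  have hsplit := card_centralizerIn_le_add h2 (h := a * h * a⁻¹) (by rwa [trace_mul_mul_inv])
    (A ^ 2) {0, 2, -2}
  have hthree : #({0, 2, -2} : Finset F) ≤ 3 := card_le_three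
  obtain ⟨w, hw⟩ := Finset.card_pos.1 (show 0 < #{w ∈ centralizerIn (A ^ 2) (a * h * a⁻¹) |
    w.1.trace ∉ ({0, 2, -2} : Finset F)} by lia)
  simp only [mem_filter, mem_centralizerIn, mem_insert, mem_singleton, not_or] at hw
  refine ⟨w, pow_subset_pow_right hA.one_mem (by norm_num) hw.1.1, hw.1.2, hw.2.1, ?_⟩
  rw [sq_ne_four_iff]
  exact hw.2.2

theorem torusInvolved_conj (hA : IsGeneratingApproximateGroup A R) (h2 : (2 : F) ≠ 0)
    (hlarge : 373248 * R ^ 5 < #A) (hh : h.1.trace ^ 2 ≠ 4) (hinvolved : TorusInvolved A h)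
    (g : SL(2, F)) : TorusInvolved A (g * h * g⁻¹) := by
  have hg : g ∈ Subgroup.closure (A : Set SL(2, F)) := hA.closure_eq_top ▸ Subgroup.mem_top g
  have hstep (a x : SL(2, F)) (ha : a ∈ A) (hx : TorusInvolved A (x * h * x⁻¹)) :
      TorusInvolved A (a * x * h * (a * x)⁻¹) := by
    rw [show a * x * h * (a * x)⁻¹ = a * (x * h * x⁻¹) * a⁻¹ by group]
    exact hA.torusInvolved_conj_of_mem h2 hlarge (by rwa [trace_mul_mul_inv]) hx ha
  induction hg using Subgroup.closure_induction_left with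
  | one => simpa using hinvolved
  | mul_left a ha x _ ih => exact hstep a x ha ih
  | inv_mul_cancel a ha x _ ih => exact hstep a⁻¹ x (hA.inv_eq ▸ inv_mem_inv ha) ih

end IsGeneratingApproximateGroup

end Tori

section ProductTheorem

variable {F : Type*} [Field F] [DecidableEq F]

theorem card_centralizerIn_le_regular_add_four (h2 : (2 : F) ≠ 0) {h : SL(2, F)}
    (hh : h.1.trace ^ 2 ≠ 4) (B : Finset SL(2, F)) :
    #(centralizerIn B h) ≤ #{w ∈ centralizerIn B h | w.1.trace ^ 2 ≠ 4} + 4 := by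
  have hsplit := card_centralizerIn_le_add h2 hh B {2, -2}
  have htwo : #({2, -2} : Finset F) ≤ 2 := card_le_two
  simp only [mem_insert, mem_singleton, not_or, ← sq_ne_four_iff] at hsplit
  lia

theorem sum_card_regular_centralizerIn_le (h2 : (2 : F) ≠ 0) {C : Finset SL(2, F)} {t : F}
    (hC : ∀ k ∈ C, k.1.trace = t) (B : Finset SL(2, F)) :
    ∑ k ∈ C, #{w ∈ centralizerIn B k | w.1.trace ^ 2 ≠ 4} ≤ 2 * #B := by
  let r (k w : SL(2, F)) : Prop := w * k = k * w ∧ w.1.trace ^ 2 ≠ 4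
  have hbelow (w) : #(bipartiteBelow r C w) ≤ 2 := by
    by_cases hw : w.1.trace ^ 2 = 4
    · simp [bipartiteBelow, r, hw]
    refine le_trans (card_le_card fun k hk ↦ ?_)
      (card_filter_trace_eq_centralizerIn_le_two h2 hw C t)
    rw [mem_bipartiteBelow] at hk
    exact mem_filter.2 ⟨mem_centralizerIn.2 ⟨hk.1, hk.2.1.symm⟩, hC k hk.1⟩
  calc ∑ k ∈ C, #{w ∈ centralizerIn B k | w.1.trace ^ 2 ≠ 4}
      = ∑ k ∈ C, #(bipartiteAbove r B k) := by simp only [centralizerIn, filter_filter]; rfl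
    _ = ∑ w ∈ B, #(bipartiteBelow r C w) := sum_card_bipartiteAbove_eq_sum_card_bipartiteBelow r
    _ ≤ 2 * #B := by
      rw [mul_comm, ← smul_eq_mul]
      exact sum_le_card_nsmul _ _ _ fun w _ ↦ hbelow w

theorem IsGeneratingApproximateGroup.pow_three_card_le_of_forall_torusInvolved
    {A C : Finset SL(2, F)} {R : ℝ} {t : F} (hA : IsGeneratingApproximateGroup A R)
    (h2 : (2 : F) ≠ 0) (hlarge : 373248 * R ^ 5 < #A) (ht : t ^ 2 ≠ 4) (hCne : C.Nonempty)
    (hCt : ∀ k ∈ C, k.1.trace = t) (hCA : ∀ k ∈ C, TorusInvolved A k) :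
    (#C : ℝ) ^ 3 ≤ 373248 * R ^ 5 * #A ^ 2 := by
  obtain ⟨k, hk, hmin⟩ := exists_min_image C (fun k ↦ #(centralizerIn (A ^ 2) k)) hCne
  have hcount : (#C : ℝ) * #(centralizerIn (A ^ 2) k) ≤ 2 * (R * #A) + 4 * #C := calc
    _ ≤ ((∑ l ∈ C, (#{w ∈ centralizerIn (A ^ 2) l | w.1.trace ^ 2 ≠ 4} + 4) : ℕ) : ℝ) := by
      norm_cast
      rw [← smul_eq_mul]
      exact card_nsmul_le_sum _ _ _ fun l hl ↦ (hmin l hl).trans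
        (card_centralizerIn_le_regular_add_four h2 (by rwa [hCt l hl]) _)
    _ ≤ 2 * #(A ^ 2) + 4 * #C := by
      norm_cast
      rw [sum_add_distrib, sum_const, smul_eq_mul, mul_comm #C]
      gcongr
      exact sum_card_regular_centralizerIn_le h2 hCt _
    _ ≤ _ := by
      gcongr
      exact hA.card_pow_le_of_le (by norm_num)
  have hR := hA.one_le
  have hlower := hA.card_le_mul_pow_three_card_centralizerIn (hCA k hk)
  have hsix := hA.lt_card_centralizerIn hlarge (hCA k hk)
  generalize (#(centralizerIn (A ^ 2) k) : ℝ) = z at hcount hlower hsix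
  have hCz : #C * z ≤ 6 * (R * #A) := by nlinarith [(Nat.cast_nonneg #C : (0 : ℝ) ≤ #C)]
  refine le_of_mul_le_mul_right ?_ hA.card_pos
  calc (#C : ℝ) ^ 3 * #A ≤ #C ^ 3 * (1728 * R ^ 2 * z ^ 3) := by gcongr
    _ = 1728 * R ^ 2 * (#C * z) ^ 3 := by ring
    _ ≤ 1728 * R ^ 2 * (6 * (R * #A)) ^ 3 := by gcongr; nlinarith
    _ = 373248 * R ^ 5 * #A ^ 2 * #A := by ring

variable [Fintype F]

theorem card_specialLinear_le_mul_card_image_conj (h2 : (2 : F) ≠ 0) {h : SL(2, F)}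
    (hh : h.1.trace ^ 2 ≠ 4) :
    Fintype.card SL(2, F) ≤
      2 * Fintype.card F * #(univ.image fun g : SL(2, F) ↦ g * h * g⁻¹) := by
  refine card_le_mul_card_image univ _ fun b _ ↦ (card_filter_conj_eq_le inv_univ h b).trans ?_
  exact (card_centralizerIn_le_add h2 hh _ univ).trans_eq (by simp)

theorem pred_mul_sq_card_le_card_specialLinear :
    (Fintype.card F - 1) * Fintype.card F ^ 2 ≤ Fintype.card SL(2, F) := by
  let f (q : Fˣ × F × F) : SL(2, F) :=
    ⟨!![(q.1 : F), q.2.1; q.2.2, (1 + q.2.1 * q.2.2) / q.1], by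
      rw [det_fin_two_of]
      field_simp
      ring⟩
  have hf : Function.Injective f := by
    intro q q' h
    have hentry (i j) : (f q).1 i j = (f q').1 i j := by rw [h]
    exact Prod.ext (Units.ext (hentry 0 0)) (Prod.ext (hentry 0 1) (hentry 1 0))
  rw [← Fintype.card_units, sq, ← Fintype.card_prod, ← Fintype.card_prod]
  exact Fintype.card_le_of_injective f hf

theorem card_specialLinear_le_pow_four : Fintype.card SL(2, F) ≤ Fintype.card F ^ 4 := by
  have hentries : Function.Injective fun (g : SL(2, F)) (q : Fin 2 × Fin 2) ↦ g.1 q.1 q.2 :=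
    fun g h hgh ↦ Matrix.SpecialLinearGroup.ext _ _ fun i j ↦ congrFun hgh (i, j)
  simpa using Fintype.card_le_of_injective _ hentries

theorem pow_three_card_le_two_mul_card_specialLinear :
    (Fintype.card F : ℝ) ^ 3 ≤ 2 * Fintype.card SL(2, F) := by
  have hq : 1 < Fintype.card F := Fintype.one_lt_card
  have h := pred_mul_sq_card_le_card_specialLinear (F := F)
  norm_cast
  calc Fintype.card F ^ 3 = Fintype.card F * Fintype.card F ^ 2 := by ring
    _ ≤ 2 * (Fintype.card F - 1) * Fintype.card F ^ 2 := by gcongr; lia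
    _ ≤ 2 * Fintype.card SL(2, F) := by lia

theorem IsGeneratingApproximateGroup.card_specialLinear_le {A : Finset SL(2, F)} {R : ℝ}
    (hA : IsGeneratingApproximateGroup A R) (h2 : (2 : F) ≠ 0) (h3 : (3 : F) ≠ 0)
    (hlarge : 373248 * R ^ 5 < #A) : Fintype.card SL(2, F) ≤ 2500 * R ^ 3 * #A := by
  obtain ⟨h, hh6, hh0, hh4⟩ :=
    exists_trace_ne_of_closure_eq_top h2 h3 hA.one_mem hA.inv_eq hA.closure_eq_top
  have hclass := hA.pow_three_card_le_of_forall_torusInvolved h2 hlarge hh4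
    (C := univ.image fun g ↦ g * h * g⁻¹) (univ_nonempty.image _)
    (forall_mem_image.2 fun g _ ↦ trace_mul_mul_inv g h)
    (forall_mem_image.2 fun g _ ↦ hA.torusInvolved_conj h2 hlarge hh4 ⟨h, hh6, rfl, hh0, hh4⟩ g)
  have hindex : (Fintype.card SL(2, F) : ℝ) ≤ _ :=
    Nat.cast_le.2 (card_specialLinear_le_mul_card_image_conj h2 hh4)
  push_cast at hindex
  have hq := pow_three_card_le_two_mul_card_specialLinear (F := F)
  have hR := hA.one_le
  have hpos : (0 : ℝ) < Fintype.card SL(2, F) := Nat.cast_pos.2 Fintype.card_pos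
  have hc : (0 : ℝ) ≤ #(univ.image fun g ↦ g * h * g⁻¹) := Nat.cast_nonneg _
  generalize (#(univ.image fun g ↦ g * h * g⁻¹) : ℝ) = c at hclass hindex hc
  generalize (Fintype.card SL(2, F) : ℝ) = n at *
  generalize (Fintype.card F : ℝ) = q at *
  have hsq : n ^ 2 ≤ (2500 * R ^ 3 * #A) ^ 2 := by
    refine le_of_mul_le_mul_left ?_ hpos
    calc n * n ^ 2 = n ^ 3 := by ring
      _ ≤ (2 * q * c) ^ 3 := by gcongr
      _ = 8 * q ^ 3 * c ^ 3 := by ring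
      _ ≤ 8 * (2 * n) * (373248 * R ^ 5 * #A ^ 2) := by gcongr
      _ = n * (5971968 * R ^ 5 * #A ^ 2) := by ring
      _ ≤ n * (6250000 * R ^ 6 * #A ^ 2) := by gcongr <;> norm_num
      _ = n * (2500 * R ^ 3 * #A) ^ 2 := by ring
  exact (pow_le_pow_iff_left₀ hpos.le (by positivity) two_ne_zero).1 hsq

end ProductTheorem

section Characters

variable {A W : Type*} [AddCommGroup A] [AddCommGroup W] [Module ℂ W]

section Fintype

variable [Fintype A]

/-- For a representation `σ` of a finite abelian group, `|A|` times the projection onto the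
isotypic component of the character `ψ`. -/
noncomputable def isotypicProj (σ : AddChar A (Module.End ℂ W)) (ψ : AddChar A ℂ) :
    Module.End ℂ W :=
  ∑ a, ψ (-a) • σ a

theorem isotypicProj_apply (σ : AddChar A (Module.End ℂ W)) (ψ : AddChar A ℂ) (w : W) :
    isotypicProj σ ψ w = ∑ a, ψ (-a) • σ a w := by
  simp [isotypicProj]

theorem apply_isotypicProj (σ : AddChar A (Module.End ℂ W)) (ψ : AddChar A ℂ) (a : A) (w : W) :
    σ a (isotypicProj σ ψ w) = ψ a • isotypicProj σ ψ w := by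
  simp only [isotypicProj_apply, map_sum, map_smul, smul_sum, smul_smul]
  refine Fintype.sum_equiv (Equiv.addLeft a) _ _ fun b ↦ ?_
  rw [Equiv.coe_addLeft, ← Module.End.mul_apply, ← AddChar.map_add_eq_mul,
    ← AddChar.map_add_eq_mul, neg_add, add_neg_cancel_left]

theorem sum_isotypicProj (σ : AddChar A (Module.End ℂ W)) (w : W) :
    ∑ ψ, isotypicProj σ ψ w = (Fintype.card A : ℂ) • w := by
  classical
  simp only [isotypicProj_apply]
  rw [sum_comm]
  simp [← sum_smul, AddChar.sum_apply_eq_ite]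

theorem isotypicProj_apply_of_eigenvector {σ : AddChar A (Module.End ℂ W)} {φ : AddChar A ℂ}
    {v : W} (hv : ∀ a, σ a v = φ a • v) (ψ : AddChar A ℂ) [Decidable (φ = ψ)] :
    isotypicProj σ ψ v = if φ = ψ then (Fintype.card A : ℂ) • v else 0 := by
  classical
  have hcoeff : ∑ a, ψ (-a) * φ a = if φ - ψ = 0 then (Fintype.card A : ℂ) else 0 := by
    rw [← AddChar.sum_eq_ite]
    exact sum_congr rfl fun a _ ↦ by rw [AddChar.sub_apply, AddChar.map_neg_eq_inv]; field_simp
  simp only [isotypicProj_apply, hv, smul_smul, ← sum_smul, hcoeff, sub_eq_zero, ite_smul,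
    zero_smul]

end Fintype

variable [Finite A]

theorem exists_nontrivial_character_of_ne_one {σ : AddChar A (Module.End ℂ W)} (hσ : σ ≠ 1) :
    ∃ ψ : AddChar A ℂ, ψ ≠ 1 ∧ ∃ v : W, v ≠ 0 ∧ ∀ a, σ a v = ψ a • v := by
  classical
  have := Fintype.ofFinite A
  by_contra! h
  have hvanish (ψ : AddChar A ℂ) (hψ : ψ ≠ 1) (w : W) : isotypicProj σ ψ w = 0 := by
    by_contra hw
    obtain ⟨a, ha⟩ := h ψ hψ _ hw
    exact ha (apply_isotypicProj σ ψ a w)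
  refine hσ (DFunLike.ext _ _ fun a ↦ LinearMap.ext fun w ↦ ?_)
  have hw : isotypicProj σ 1 w = (Fintype.card A : ℂ) • w := by
    rw [← sum_isotypicProj σ w]
    exact (Fintype.sum_eq_single 1 fun ψ hψ ↦ hvanish ψ hψ w).symm
  have hfix := apply_isotypicProj σ 1 a w
  rw [hw, map_smul, AddChar.one_apply, one_smul] at hfix
  exact smul_right_injective W (Nat.cast_ne_zero.2 Fintype.card_ne_zero) hfix

theorem linearIndependent_of_character_injective {ι : Type*} {σ : AddChar A (Module.End ℂ W)}
    {ψ : ι → AddChar A ℂ} (hψ : Function.Injective ψ) {v : ι → W} (hv0 : ∀ i, v i ≠ 0)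
    (hv : ∀ i a, σ a (v i) = ψ i a • v i) : LinearIndependent ℂ v := by
  classical
  have := Fintype.ofFinite A
  rw [linearIndependent_iff']
  intro s c hc i hi
  have hproj := congrArg (isotypicProj σ (ψ i)) hc
  simp only [map_sum, map_smul, map_zero, isotypicProj_apply_of_eigenvector (hv _), hψ.eq_iff,
    smul_ite, smul_zero, sum_ite_eq', hi, if_true] at hproj
  simpa [hv0 i] using hproj

end Characters

section RepresentationDimension

variable {F : Type*} [Field F]

theorem eq_top_of_forall_transvection_mem {N : Subgroup SL(2, F)} [hN : N.Normal]
    (h : ∀ t : F, transvection zero_ne_one t ∈ N) : N = ⊤ := by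
  let weyl : SL(2, F) := ⟨!![0, 1; -1, 0], by simp⟩
  have hconj (t : F) :
      weyl * transvection zero_ne_one (-t) * weyl⁻¹ = transvection one_ne_zero t := by
    rw [mul_inv_eq_iff_eq_mul]
    ext i j
    rw [Matrix.SpecialLinearGroup.coe_mul, Matrix.SpecialLinearGroup.coe_mul]
    fin_cases i <;> fin_cases j <;> simp [weyl, transvection_coe, Matrix.mul_apply]
  refine (Subgroup.eq_top_iff' N).2 fun g ↦
    Matrix.SL2.transvection_induction (· ∈ N) (fun i j hij t ↦ ?_) (fun _ _ ↦ N.mul_mem) g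
  fin_cases i <;> fin_cases j
  · exact absurd rfl hij
  · exact h t
  · exact hconj t ▸ hN.conj_mem _ (h (-t)) weyl
  · exact absurd rfl hij

theorem transvection_mul_diag2_inv {a : F} (ha : a ≠ 0) (t : F) :
    transvection zero_ne_one t * (diag2 a ha)⁻¹ =
      (diag2 a ha)⁻¹ * transvection zero_ne_one (a ^ 2 * t) := by
  rw [diag2_inv]
  ext i j
  fin_cases i <;> fin_cases j <;>
    simp [transvection_coe, diag2_coe', Matrix.mul_apply, field]

theorem card_sub_one_le_two_mul_card_image_sq [Fintype F] [DecidableEq F] :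
    Fintype.card F - 1 ≤ 2 * #(univ.image fun a : Fˣ ↦ (a : F) ^ 2) := by
  rw [← Fintype.card_units, ← card_univ]
  refine card_le_mul_card_image _ _ fun b hb ↦ ?_
  obtain ⟨a, -, rfl⟩ := mem_image.1 hb
  refine (card_le_card (t := {a, -a}) fun x hx ↦ ?_).trans card_le_two
  simpa [sq_eq_sq_iff_eq_or_eq_neg, Units.ext_iff] using hx

variable {W : Type*} [AddCommGroup W] [Module ℂ W]

/-- The restriction of a representation of `SL(2, F)` to the upper unipotent subgroup. -/
noncomputable def unipotentRestriction (ρ : Representation ℂ SL(2, F) W) :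
    AddChar F (Module.End ℂ W) where
  toFun t := ρ (transvection zero_ne_one t)
  map_zero_eq_one' := by simp
  map_add_eq_mul' s t := by rw [Matrix.SpecialLinearGroup.transvection_add, map_mul]

theorem unipotentRestriction_ne_one {ρ : Representation ℂ SL(2, F) W} (hρ : ρ ≠ 1) :
    unipotentRestriction ρ ≠ 1 := by
  refine fun h ↦ hρ (MonoidHom.ker_eq_top_iff.1 ?_)
  exact eq_top_of_forall_transvection_mem (DFunLike.congr_fun h)

theorem unipotentRestriction_apply_diag2_inv {ρ : Representation ℂ SL(2, F) W} {ψ : AddChar F ℂ}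
    {v : W} (hv : ∀ t, unipotentRestriction ρ t v = ψ t • v) {a : F} (ha : a ≠ 0) (t : F) :
    unipotentRestriction ρ t (ρ (diag2 a ha)⁻¹ v) =
      ψ.mulShift (a ^ 2) t • ρ (diag2 a ha)⁻¹ v := by
  calc
    _ = (ρ (transvection zero_ne_one t * (diag2 a ha)⁻¹)) v := by
      rw [map_mul]; rfl
    _ = ρ (diag2 a ha)⁻¹ (unipotentRestriction ρ (a ^ 2 * t) v) := by
      rw [transvection_mul_diag2_inv, map_mul]; rfl
    _ = _ := by rw [hv, map_smul, AddChar.mulShift_apply]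

theorem card_sub_one_le_two_mul_finrank [Fintype F] [FiniteDimensional ℂ W]
    {ρ : Representation ℂ SL(2, F) W} (hρ : ρ ≠ 1) :
    Fintype.card F - 1 ≤ 2 * Module.finrank ℂ W := by
  classical
  obtain ⟨ψ, hψ, v, hv0, hv⟩ :=
    exists_nontrivial_character_of_ne_one (unipotentRestriction_ne_one hρ)
  set S := univ.image fun a : Fˣ ↦ (a : F) ^ 2
  have hex (b : S) : ∃ w : W, w ≠ 0 ∧ ∀ t, unipotentRestriction ρ t w = ψ.mulShift b t • w := by
    obtain ⟨b, hb⟩ := b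
    obtain ⟨a, -, rfl⟩ := mem_image.1 hb
    refine ⟨_, ?_, unipotentRestriction_apply_diag2_inv hv a.ne_zero⟩
    exact (map_ne_zero_iff _ (ρ.apply_bijective _).1).2 hv0
  choose w hw0 hw using hex
  have hshift : Function.Injective fun b : S ↦ ψ.mulShift b :=
    (AddChar.to_mulShift_inj_of_isPrimitive (.of_ne_one hψ)).comp Subtype.val_injective
  have hcard := (linearIndependent_of_character_injective hshift hw0 hw).fintype_card_le_finrank
  rw [Fintype.card_coe] at hcard
  exact card_sub_one_le_two_mul_card_image_sq.trans (Nat.mul_le_mul_left 2 hcard)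

end RepresentationDimension

section SpectralBounds

theorem mul_norm_sq_le_of_forall_eigenvalue {E : Type*} [NormedAddCommGroup E]
    [InnerProductSpace ℂ E] [FiniteDimensional ℂ E] {T : E →ₗ[ℂ] E} (hT : T.IsSymmetric)
    {D B : ℝ} (hB : ∀ l : ℝ, Module.End.HasEigenvalue T (l : ℂ) → D * l ^ 2 ≤ B) (x : E) :
    D * ‖T x‖ ^ 2 ≤ B * ‖x‖ ^ 2 := by
  let b := hT.eigenvectorBasis rfl
  have hcoord (i) : D * ‖inner ℂ (b i) (T x)‖ ^ 2 ≤ B * ‖inner ℂ (b i) x‖ ^ 2 := by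
    have heig : T (b i) = (hT.eigenvalues rfl i : ℂ) • b i := hT.apply_eigenvectorBasis rfl i
    rw [← hT (b i) x, heig, inner_smul_left, norm_mul, mul_pow, ← mul_assoc, Complex.conj_ofReal,
      Complex.norm_real, Real.norm_eq_abs, sq_abs]
    gcongr
    exact hB _ (hT.hasEigenvalue_eigenvalues rfl i)
  rw [← b.sum_sq_norm_inner_right (T x), ← b.sum_sq_norm_inner_right x, mul_sum, mul_sum]
  exact sum_le_sum fun i _ ↦ hcoord i

-- Computes the Hilbert–Schmidt norm of `A` on the eigenspace and bounds it by that of `A`.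
theorem finrank_eigenspace_mul_sq_le {n : Type*} [Fintype n] [DecidableEq n] (A : Matrix n n ℂ)
    (l : ℂ) : Module.finrank ℂ (Module.End.eigenspace A.toEuclideanLin l) * ‖l‖ ^ 2 ≤
      ∑ i, ∑ j, ‖A i j‖ ^ 2 := by
  let b := stdOrthonormalBasis ℂ (Module.End.eigenspace A.toEuclideanLin l)
  have hb : Orthonormal ℂ fun i ↦ (b i : EuclideanSpace ℂ n) :=
    b.orthonormal.comp_linearIsometry (Submodule.subtypeₗᵢ _)
  let row (i : n) : EuclideanSpace ℂ n := WithLp.toLp 2 fun j ↦ star (A i j)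
  have hrow (i : n) (v : EuclideanSpace ℂ n) : A.toEuclideanLin v i = inner ℂ (row i) v := by
    simp [row, toLpLin_apply, PiLp.inner_apply, Matrix.mulVec, dotProduct, mul_comm]
  have bessel (i : n) : ∑ k, ‖A.toEuclideanLin (b k) i‖ ^ 2 ≤ ∑ j, ‖A i j‖ ^ 2 := by
    have hnorm_row : ‖row i‖ ^ 2 = ∑ j, ‖A i j‖ ^ 2 := by simp [row, EuclideanSpace.norm_sq_eq]
    simp only [hrow, ← hnorm_row, norm_inner_symm (row i)]
    exact hb.sum_inner_products_le (row i)
  have hnorm (k) : ∑ i, ‖A.toEuclideanLin (b k) i‖ ^ 2 = ‖l‖ ^ 2 := by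
    rw [← EuclideanSpace.norm_sq_eq, Module.End.mem_eigenspace_iff.1 (b k).2, norm_smul, hb.1 k,
      mul_one]
  calc
    _ = ∑ k, ∑ i, ‖A.toEuclideanLin (b k) i‖ ^ 2 := by
      simp only [hnorm, sum_const, card_univ, Fintype.card_fin, nsmul_eq_mul]
    _ = ∑ i, ∑ k, ‖A.toEuclideanLin (b k) i‖ ^ 2 := sum_comm
    _ ≤ ∑ i, ∑ j, ‖A i j‖ ^ 2 := sum_le_sum fun i _ ↦ bessel i

end SpectralBounds

section Quasirandomness

universe u

/-- Quasirandomness in the sense of Gowers: nontrivial complex representations of `G` have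
dimension at least `D`. -/
def IsQuasirandom (G : Type u) [Group G] (D : ℝ) : Prop :=
  ∀ (W : Type u) [AddCommGroup W] [Module ℂ W] [FiniteDimensional ℂ W] (ρ : Representation ℂ G W),
    ρ ≠ 1 → D ≤ Module.finrank ℂ W

theorem isQuasirandom_specialLinear (F : Type u) [Field F] [Fintype F] :
    IsQuasirandom SL(2, F) ((Fintype.card F - 1) / 2) := by
  intro W _ _ _ ρ hρ
  have h := card_sub_one_le_two_mul_finrank hρ
  rw [tsub_le_iff_right] at h
  have : (Fintype.card F : ℝ) ≤ 2 * Module.finrank ℂ W + 1 := mod_cast h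
  linarith

variable {G : Type u} [Group G]

/-- The right regular representation, on the Hilbert space of functions on `G`. -/
noncomputable def rightRegular (G : Type u) [Group G] :
    Representation ℂ G (EuclideanSpace ℂ G) where
  toFun g := (WithLp.linearEquiv 2 ℂ (G → ℂ)).symm.conj (LinearMap.funLeft ℂ ℂ (· * g))
  map_one' := by ext φ x; simp
  map_mul' g h := by ext φ x; simp [mul_assoc]

theorem rightRegular_apply (g : G) (φ : EuclideanSpace ℂ G) (x : G) :
    rightRegular G g φ x = φ (x * g) := rfl

section ConvolutionOperator

variable [Fintype G] [DecidableEq G]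

/-- The operator of left convolution by `f`. -/
noncomputable def convOp (f : G → ℝ) : Module.End ℂ (EuclideanSpace ℂ G) :=
  toEuclideanLin (Matrix.of fun x y ↦ (f (x * y⁻¹) : ℂ))

theorem convOp_apply (f : G → ℝ) (φ : EuclideanSpace ℂ G) (x : G) :
    convOp f φ x = ∑ y, f (x * y⁻¹) * φ y := rfl

theorem convOp_ofReal (f g : G → ℝ) :
    convOp f (WithLp.toLp 2 fun x ↦ (g x : ℂ)) = WithLp.toLp 2 fun x ↦ (convG f g x : ℂ) := by
  ext x
  rw [convOp_apply, PiLp.toLp_apply, convG]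
  push_cast
  exact Fintype.sum_equiv ((Equiv.inv G).trans (Equiv.mulLeft x)) _ _ fun y ↦ by simp

theorem convOp_rightRegular (f : G → ℝ) (g : G) (φ : EuclideanSpace ℂ G) :
    convOp f (rightRegular G g φ) = rightRegular G g (convOp f φ) := by
  ext x
  rw [convOp_apply, rightRegular_apply, convOp_apply]
  exact Fintype.sum_equiv (Equiv.mulRight g) _ _ fun y ↦ by simp [rightRegular_apply, mul_assoc]

theorem isSymmetric_convOp {f : G → ℝ} (hf : ∀ x, f x⁻¹ = f x) : (convOp f).IsSymmetric := by
  refine isSymmetric_toEuclideanLin_iff.2 (Matrix.IsHermitian.ext fun x y ↦ ?_)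
  simp [← hf (x * y⁻¹)]

theorem sum_convOp (f : G → ℝ) (φ : EuclideanSpace ℂ G) :
    ∑ x, convOp f φ x = ((∑ x, f x : ℝ) : ℂ) * ∑ x, φ x := by
  simp only [convOp_apply]
  rw [sum_comm, mul_sum]
  refine sum_congr rfl fun y _ ↦ ?_
  rw [← sum_mul, ← sum_apply_mul_right f y⁻¹, Complex.ofReal_sum]

theorem finrank_eigenspace_convOp_mul_sq_le (f : G → ℝ) (l : ℝ) :
    Module.finrank ℂ (Module.End.eigenspace (convOp f) (l : ℂ)) * l ^ 2 ≤
      Fintype.card G * l2Sq f := by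
  have hrow (x : G) : ∑ y, f (x * y⁻¹) ^ 2 = l2Sq f :=
    Fintype.sum_equiv ((Equiv.inv G).trans (Equiv.mulLeft x)) _ _ fun y ↦ rfl
  have h : Module.finrank ℂ (Module.End.eigenspace (convOp f) (l : ℂ)) * ‖(l : ℂ)‖ ^ 2 ≤ _ :=
    finrank_eigenspace_mul_sq_le (Matrix.of fun x y ↦ (f (x * y⁻¹) : ℂ)) l
  simpa [hrow] using h

/-- The eigenspaces of left convolution are subrepresentations of the right regular one. -/
noncomputable def convOpEigenspace (f : G → ℝ) (l : ℂ) : Subrepresentation (rightRegular G) where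
  toSubmodule := Module.End.eigenspace (convOp f) l
  apply_mem_toSubmodule g v hv := by
    rw [Module.End.mem_eigenspace_iff] at hv ⊢
    rw [convOp_rightRegular, hv, map_smul]

theorem convOpEigenspace_toRepresentation_ne_one {f : G → ℝ} (hf : ∑ x, f x = 0) {l : ℂ}
    (hl : l ≠ 0) (heig : Module.End.HasEigenvalue (convOp f) l) :
    (convOpEigenspace f l).toRepresentation ≠ 1 := by
  intro htriv
  obtain ⟨v, hv⟩ := heig.exists_hasEigenvector
  have hconst (g : G) : v g = v 1 := by
    have hfix := congrArg Subtype.val (LinearMap.congr_fun (DFunLike.congr_fun htriv g) ⟨v, hv.1⟩)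
    have h1 : rightRegular G g v 1 = v 1 := congrArg (fun φ : EuclideanSpace ℂ G ↦ φ 1) hfix
    rwa [rightRegular_apply, one_mul] at h1
  have hsum := sum_convOp f v
  rw [hf, hv.apply_eq_smul] at hsum
  have hv1 : v 1 = 0 := by simpa [hconst, hl] using hsum
  exact hv.2 (PiLp.ext fun g ↦ (hconst g).trans hv1)

end ConvolutionOperator

theorem IsQuasirandom.mul_l2Sq_convG_self_le [Fintype G] {D : ℝ} (hG : IsQuasirandom G D)
    {f : G → ℝ} (hsymm : ∀ x, f x⁻¹ = f x) (hsum : ∑ x, f x = 0) :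
    D * l2Sq (convG f f) ≤ Fintype.card G * l2Sq f ^ 2 := by
  classical
  have hnorm (g : G → ℝ) : ‖WithLp.toLp 2 fun x ↦ (g x : ℂ)‖ ^ 2 = l2Sq g := by
    simp [EuclideanSpace.norm_sq_eq, l2Sq]
  have heig (l : ℝ) (hl : Module.End.HasEigenvalue (convOp f) (l : ℂ)) :
      D * l ^ 2 ≤ Fintype.card G * l2Sq f := by
    obtain rfl | hl0 := eq_or_ne l 0
    · have : 0 ≤ l2Sq f := sum_nonneg fun _ _ ↦ sq_nonneg _
      simpa using by positivity
    refine le_trans ?_ (finrank_eigenspace_convOp_mul_sq_le f l)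
    gcongr
    exact hG _ _
      (convOpEigenspace_toRepresentation_ne_one hsum (Complex.ofReal_ne_zero.2 hl0) hl)
  have h := mul_norm_sq_le_of_forall_eigenvalue (isSymmetric_convOp hsymm) heig
    (WithLp.toLp 2 fun x ↦ (f x : ℂ))
  rw [convOp_ofReal, hnorm, hnorm] at h
  linarith

end Quasirandomness

section Nonconcentration

variable {G : Type*} [Group G] [Fintype G] {μ ν : G → ℝ} {ε : ℝ}

/-- Every left coset of a proper subgroup has `μ`-mass at most `ε`. -/
def IsNonconcentrated (μ : G → ℝ) (ε : ℝ) : Prop :=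
  ∀ Γ : Subgroup G, Γ ≠ ⊤ → ∀ g : G, massOn μ (g • (Γ : Set G)) ≤ ε

theorem IsNonconcentrated.convG (hν : IsNonconcentrated ν ε) (hμ : ∀ x, 0 ≤ μ x)
    (hμ1 : ∑ x, μ x = 1) : IsNonconcentrated (convG μ ν) ε :=
  fun Γ hΓ g ↦ massOn_convG_le hμ hμ1 fun y ↦ by
    rw [smul_smul]
    exact hν Γ hΓ _

theorem IsNonconcentrated.iterConv_two_pow_sub_one (hμ : IsSymmProb μ)
    (hε : IsNonconcentrated μ ε) (k : ℕ) : IsNonconcentrated (iterConv μ (2 ^ k - 1)) ε := by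
  induction k with
  | zero => exact hε
  | succ k ih =>
    have hk := hμ.iterConv_two_pow_sub_one k
    rw [iterConv_two_pow_succ_sub_one]
    exact ih.convG hk.nonneg hk.sum_eq_one

theorem IsNonconcentrated.apply_le [Nontrivial G] (hε : IsNonconcentrated μ ε) (g : G) :
    μ g ≤ ε := by
  simpa [massOn_singleton] using hε ⊥ bot_ne_top g

theorem IsNonconcentrated.closure_eq_top (hε : IsNonconcentrated μ ε) (hμ : ∀ x, 0 ≤ μ x)
    {S : Set G} {u : G} (hS : ε < massOn μ (u • S)) : Subgroup.closure S = ⊤ := by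
  by_contra hne
  exact hS.not_ge ((massOn_mono hμ (Set.smul_set_mono Subgroup.subset_closure)).trans
    (hε _ hne u))

theorem massOn_smul_finset_le (hε : ∀ x, μ x ≤ ε) (u : G) (S : Finset G) :
    massOn μ (u • (S : Set G)) ≤ #S * ε := by
  classical
  have h := sum_le_card_nsmul (u • S) μ ε fun x _ ↦ hε x
  rwa [card_smul_finset, nsmul_eq_mul, ← sum_indicator_subset μ (subset_univ _),
    coe_smul_finset] at h

theorem l2Sq_le_of_forall_le (hμ : IsSymmProb μ) (hε : ∀ x, μ x ≤ ε) : l2Sq μ ≤ ε := by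
  calc l2Sq μ ≤ ∑ x, ε * μ x :=
        sum_le_sum fun x _ ↦ by rw [sq]; exact mul_le_mul_of_nonneg_right (hε x) (hμ.nonneg x)
    _ = ε := by rw [← mul_sum, hμ.sum_eq_one, mul_one]

end Nonconcentration

section Flattening

theorem IsQuasirandom.l2Sq_convG_self_sub_le {G : Type*} [Group G] [Fintype G] {D T : ℝ}
    {ν : G → ℝ} (hG : IsQuasirandom G D) (hν : IsSymmProb ν) (hT : Fintype.card G * l2Sq ν ≤ T) :
    D * (l2Sq (convG ν ν) - (Fintype.card G : ℝ)⁻¹) ≤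
      T * (l2Sq ν - (Fintype.card G : ℝ)⁻¹) := by
  have h := hG.mul_l2Sq_convG_self_le (f := fun x ↦ ν x - (Fintype.card G : ℝ)⁻¹)
    (fun x ↦ by rw [hν.apply_inv]) (sum_sub_uniform hν.sum_eq_one)
  rw [convG_sub_uniform hν.sum_eq_one hν.sum_eq_one, l2Sq_sub_uniform hν.sum_eq_one,
    l2Sq_sub_uniform hν.convG_self.sum_eq_one] at h
  have hexcess := sub_nonneg.2 (inv_card_le_l2Sq hν.sum_eq_one)
  have hcard : (0 : ℝ) ≤ (Fintype.card G : ℝ)⁻¹ := by positivity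
  refine h.trans ?_
  rw [sq, ← mul_assoc]
  refine mul_le_mul_of_nonneg_right (le_trans ?_ hT) hexcess
  gcongr
  linarith

variable {F : Type*} [Field F] [Fintype F] [DecidableEq F] {ν μ : SL(2, F) → ℝ} {M K r : ℝ}

instance : Nontrivial SL(2, F) :=
  ⟨transvection (zero_ne_one : (0 : Fin 2) ≠ 1) 1, 1, fun h ↦ by
    simpa [transvection_coe] using congrArg (fun g : SL(2, F) ↦ g 0 1) h⟩

theorem le_card_specialLinear_of_isNonconcentrated (hν : IsSymmProb ν) (hK : 0 < K)
    (hε : IsNonconcentrated ν K⁻¹) : K ≤ Fintype.card SL(2, F) := by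
  have h : ∑ x, ν x ≤ Fintype.card SL(2, F) • K⁻¹ :=
    sum_le_card_nsmul _ _ _ fun x _ ↦ hε.apply_le x
  rwa [hν.sum_eq_one, nsmul_eq_mul, ← div_eq_mul_inv, one_le_div hK] at h

theorem l2Sq_fourfold_sub_le_of_card_mul_l2Sq_le (hν : IsSymmProb ν) (hM : 0 < M) {T : ℝ}
    (hT : Fintype.card SL(2, F) * l2Sq ν ≤ T) (hTM : T * M ≤ Fintype.card F) :
    l2Sq (convG (convG ν ν) (convG ν ν)) - (Fintype.card SL(2, F) : ℝ)⁻¹ ≤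
      4 / M * (l2Sq ν - (Fintype.card SL(2, F) : ℝ)⁻¹) := by
  have hsq := hν.convG_self
  have hquasi := (isQuasirandom_specialLinear F).l2Sq_convG_self_sub_le hν hT
  have hmono := l2Sq_convG_le (convG ν ν) hsq.nonneg hsq.sum_eq_one
  have hexcess := sub_nonneg.2 (inv_card_le_l2Sq hν.sum_eq_one)
  have hexcess_sq := sub_nonneg.2 (inv_card_le_l2Sq hsq.sum_eq_one)
  set i := (Fintype.card SL(2, F) : ℝ)⁻¹
  set q := (Fintype.card F : ℝ)
  have hq : 2 ≤ q := Nat.ofNat_le_cast.2 Fintype.one_lt_card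
  refine (sub_le_sub_right hmono i).trans ?_
  rw [div_mul_eq_mul_div, le_div_iff₀ hM]
  refine le_of_mul_le_mul_left ?_ (by linarith : 0 < q)
  calc q * ((l2Sq (convG ν ν) - i) * M)
      ≤ 2 * (q - 1) * ((l2Sq (convG ν ν) - i) * M) := by gcongr; linarith
    _ = 4 * M * ((q - 1) / 2 * (l2Sq (convG ν ν) - i)) := by ring
    _ ≤ 4 * M * (T * (l2Sq ν - i)) := by gcongr
    _ = 4 * (T * M) * (l2Sq ν - i) := by ring
    _ ≤ 4 * q * (l2Sq ν - i) := by gcongr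
    _ = q * (4 * (l2Sq ν - i)) := by ring

-- The set on which `ν ∗ ν` concentrates is an approximate subgroup, too large to lie in a proper
-- subgroup, so the product theorem makes it almost the whole group.
theorem card_mul_l2Sq_le_of_l2Sq_le_mul_fourfold (h2 : (2 : F) ≠ 0) (h3 : (3 : F) ≠ 0)
    (hν : IsSymmProb ν) (hM : 64 ≤ M) (hMK : M ^ 10017 ≤ K) (hε : IsNonconcentrated ν K⁻¹)
    (hflat : l2Sq ν / M ≤ l2Sq (convG (convG ν ν) (convG ν ν))) :
    Fintype.card SL(2, F) * l2Sq ν ≤ M ^ 6074 := by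
  have hM1 : 1 ≤ M := by linarith
  have hK : 0 < K := by linarith [one_le_pow₀ (n := 10017) hM1]
  have hpos : 0 < l2Sq ν := (by positivity : (0 : ℝ) < (Fintype.card SL(2, F) : ℝ)⁻¹).trans_le
    (inv_card_le_l2Sq hν.sum_eq_one)
  have henergy : l2Sq ν / M ≤ ∑ x, ∑ y, convG ν ν x * convG ν ν y * convG ν ν (x * y) := by
    rw [sum_convG_self_mul_mul hν.apply_inv]
    rw [← convG_assoc] at hflat
    exact hflat.trans (l2Sq_convG_le _ hν.nonneg hν.sum_eq_one)
  obtain ⟨H, hone, hinv, hcard, hgrowth, u, hmass⟩ := exists_approximate_subgroup_of_large_energy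
    hpos hM hν.convG_self.nonneg hν.convG_self.sum_eq_one (convG_self_le_l2Sq ν) henergy
  have hεsq := hε.convG hν.nonneg hν.sum_eq_one
  have hlarge : K ≤ M ^ 38 * #H := by
    rw [← one_le_div hK]
    calc 1 ≤ M ^ 38 * massOn (convG ν ν) (u • (H : Set SL(2, F))) := hmass
      _ ≤ M ^ 38 * (#H * K⁻¹) := by gcongr; exact massOn_smul_finset_le hεsq.apply_le u H
      _ = M ^ 38 * #H / K := by ring
  have hgen : Subgroup.closure (H : Set SL(2, F)) = ⊤ := by
    refine hεsq.closure_eq_top hν.convG_self.nonneg (u := u) ?_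
    have hlt : M ^ 38 < K := (pow_lt_pow_right₀ (by linarith) (by norm_num)).trans_le hMK
    refine lt_of_mul_lt_mul_left (lt_of_lt_of_le ?_ hmass) (by positivity : 0 ≤ M ^ 38)
    rwa [← div_eq_mul_inv, div_lt_one hK]
  have hH : IsGeneratingApproximateGroup H (M ^ 1995) := ⟨hone, hinv, hgen, hgrowth 34⟩
  have hproduct := hH.card_specialLinear_le h2 h3 <| by
    refine lt_of_mul_lt_mul_left ?_ (by positivity : 0 ≤ M ^ 38)
    calc M ^ 38 * (373248 * (M ^ 1995) ^ 5) < M ^ 38 * (M ^ 4 * (M ^ 1995) ^ 5) := by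
          gcongr
          exact lt_of_lt_of_le (by norm_num) (pow_le_pow_left₀ (by norm_num) hM 4)
      _ = M ^ 10017 := by simp only [← pow_mul, ← pow_add]
      _ ≤ M ^ 38 * #H := hMK.trans hlarge
  calc Fintype.card SL(2, F) * l2Sq ν ≤ 2500 * (M ^ 1995) ^ 3 * #H * l2Sq ν := by gcongr
    _ = 2500 * (M ^ 1995) ^ 3 * (#H * l2Sq ν) := by ring
    _ ≤ M ^ 2 * (M ^ 1995) ^ 3 * M ^ 87 := by gcongr; nlinarith
    _ = M ^ 6074 := by simp only [← pow_mul, ← pow_add]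

theorem l2Sq_fourfold_sub_le (h2 : (2 : F) ≠ 0) (h3 : (3 : F) ≠ 0) (hν : IsSymmProb ν)
    (hM : 64 ≤ M) (hMK : M ^ 25000 ≤ K) (hε : IsNonconcentrated ν K⁻¹) :
    l2Sq (convG (convG ν ν) (convG ν ν)) - (Fintype.card SL(2, F) : ℝ)⁻¹ ≤
      4 / M * (l2Sq ν - (Fintype.card SL(2, F) : ℝ)⁻¹) := by
  have hM1 : 1 ≤ M := by linarith
  have hn : (0 : ℝ) < Fintype.card SL(2, F) := by positivity
  obtain hsmall | hlarge := le_or_gt (Fintype.card SL(2, F) * l2Sq ν) (M ^ 6074)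
  · refine l2Sq_fourfold_sub_le_of_card_mul_l2Sq_le hν (by linarith) hsmall ?_
    have hK : 0 < K := by linarith [one_le_pow₀ (n := 25000) hM1]
    refine le_of_pow_le_pow_left₀ four_ne_zero (Nat.cast_nonneg _) ?_
    calc (M ^ 6074 * M) ^ 4 = M ^ 24300 := by ring
      _ ≤ M ^ 25000 := pow_le_pow_right₀ hM1 (by norm_num)
      _ ≤ K := hMK
      _ ≤ Fintype.card SL(2, F) := le_card_specialLinear_of_isNonconcentrated hν hK hε
      _ ≤ (Fintype.card F : ℝ) ^ 4 := mod_cast card_specialLinear_le_pow_four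
  · have hflat : l2Sq (convG (convG ν ν) (convG ν ν)) < l2Sq ν / M := by
      contrapose! hlarge
      exact card_mul_l2Sq_le_of_l2Sq_le_mul_fourfold h2 h3 hν hM
        ((pow_le_pow_right₀ hM1 (by norm_num)).trans hMK) hε hlarge
    have huniform : 2 * (Fintype.card SL(2, F) : ℝ)⁻¹ ≤ l2Sq ν := by
      rw [← div_eq_mul_inv, div_le_iff₀' hn]
      linarith [le_self_pow₀ hM1 (by norm_num : 6074 ≠ 0)]
    set i := (Fintype.card SL(2, F) : ℝ)⁻¹
    have hi : 0 < i := by positivity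
    calc _ ≤ l2Sq ν / M := by linarith
      _ ≤ 4 * (l2Sq ν - i) / M := by gcongr; linarith
      _ = _ := by ring

theorem l2Sq_iterConv_sub_le_pow (h2 : (2 : F) ≠ 0) (h3 : (3 : F) ≠ 0) (hμ : IsSymmProb μ)
    (hr : 8 ≤ r) (hε : IsNonconcentrated μ (r ^ 50000)⁻¹) (k : ℕ) :
    l2Sq (iterConv μ (2 ^ k - 1)) - (Fintype.card SL(2, F) : ℝ)⁻¹ ≤ (2 / r) ^ k := by
  have hi : (0 : ℝ) ≤ (Fintype.card SL(2, F) : ℝ)⁻¹ := by positivity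
  have hbase (n : ℕ) : l2Sq (iterConv μ n) ≤ r⁻¹ :=
    calc _ ≤ l2Sq μ := l2Sq_iterConv_le hμ n
      _ ≤ (r ^ 50000)⁻¹ := l2Sq_le_of_forall_le hμ hε.apply_le
      _ ≤ r⁻¹ := inv_anti₀ (by linarith) (le_self_pow₀ (by linarith) (by norm_num))
  induction k using Nat.twoStepInduction with
  | zero => linarith [hbase 0, inv_le_one_of_one_le₀ (by linarith : 1 ≤ r), pow_zero (2 / r)]
  | one =>
    have : 0 ≤ r⁻¹ := by positivity
    rw [pow_one, pow_one, div_eq_mul_inv]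
    linarith [hbase (2 - 1)]
  | more k ih _ =>
    rw [iterConv_two_pow_succ_sub_one, iterConv_two_pow_succ_sub_one]
    calc _ ≤ 4 / r ^ 2 * _ := l2Sq_fourfold_sub_le h2 h3 (hμ.iterConv_two_pow_sub_one k)
          (by nlinarith) (by rw [← pow_mul]) (hε.iterConv_two_pow_sub_one hμ k)
      _ ≤ 4 / r ^ 2 * (2 / r) ^ k := by gcongr
      _ = (2 / r) ^ (k + 2) := by rw [pow_add, div_pow 2 r 2]; ring

end Flattening

theorem stmt18_general {F : Type*} [Field F] [Fintype F] [DecidableEq F] (h2 : (2 : F) ≠ 0)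
    (h3 : (3 : F) ≠ 0) {K : ℝ} (hK : 0 < K) {μ : SL(2, F) → ℝ} (hμ : IsSymmProb μ)
    (hε : IsNonconcentrated μ K⁻¹) (k : ℕ) :
    0 ≤ l2Sq (iterConv μ (2 ^ k - 1)) - (Fintype.card SL(2, F) : ℝ)⁻¹ ∧
      l2Sq (iterConv μ (2 ^ k - 1)) - (Fintype.card SL(2, F) : ℝ)⁻¹ ≤
        8 ^ k * K ^ (-(1 / 50000 * k) : ℝ) := by
  have hprob := hμ.iterConv_two_pow_sub_one k
  refine ⟨sub_nonneg.2 (inv_card_le_l2Sq hprob.sum_eq_one), ?_⟩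
  obtain ⟨r, hr, rfl⟩ : ∃ r : ℝ, 0 < r ∧ r ^ 50000 = K :=
    ⟨K ^ ((50000 : ℕ) : ℝ)⁻¹, by positivity, Real.rpow_inv_natCast_pow hK.le (by norm_num)⟩
  have hbound : 8 ^ k * (r ^ 50000) ^ (-(1 / 50000 * k) : ℝ) = (8 / r) ^ k := by
    have hexp : ((50000 : ℕ) : ℝ) * -(1 / 50000 * k) = -k := by push_cast; ring
    rw [← Real.rpow_natCast_mul hr.le, hexp, Real.rpow_neg hr.le, Real.rpow_natCast, div_pow,
      div_eq_mul_inv]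
  rw [hbound]
  obtain hr8 | hr8 := le_or_gt 8 r
  · refine (l2Sq_iterConv_sub_le_pow h2 h3 hμ hr8 hε k).trans ?_
    gcongr
    norm_num
  · have hone : l2Sq (iterConv μ (2 ^ k - 1)) ≤ 1 := l2Sq_le_of_forall_le hprob fun x ↦
      hprob.sum_eq_one ▸ single_le_sum (fun y _ ↦ hprob.nonneg y) (mem_univ x)
    have : 1 ≤ (8 / r) ^ k := one_le_pow₀ ((one_le_div hr).2 hr8.le)
    have : (0 : ℝ) ≤ (Fintype.card SL(2, F) : ℝ)⁻¹ := by positivity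
    linarith

theorem natCast_zmod_ne_zero {n p : ℕ} (hn : 0 < n) (hnp : n < p) : (n : ZMod p) ≠ 0 := by
  rw [Ne, ZMod.natCast_eq_zero_iff]
  exact Nat.not_dvd_of_pos_of_lt hn hnp

theorem stmt18 :
    ∃ c C : ℝ, 0 < c ∧ c < 1 ∧ 1 < C ∧
      ∀ (p : ℕ) [Fact p.Prime], 5 ≤ p →
        ∀ K : ℝ, 1 ≤ K →
          ∀ μ : Matrix.SpecialLinearGroup (Fin 2) (ZMod p) → ℝ,
            (∀ g, 0 ≤ μ g) →
            (∑ g, μ g) = 1 →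
            (∀ g, μ g = μ g⁻¹) →
            (∀ Γ : Subgroup (Matrix.SpecialLinearGroup (Fin 2) (ZMod p)), Γ ≠ ⊤ →
              ∀ g : Matrix.SpecialLinearGroup (Fin 2) (ZMod p),
                (∑ x, Set.indicator (g • (Γ : Set (Matrix.SpecialLinearGroup (Fin 2) (ZMod p)))) μ x)
                  ≤ K⁻¹) →
            (∀ g, μ g ≤ K⁻¹) →
            ∀ k : ℕ, 0 < k → (k : ℝ) ≤ K ^ c →
              0 ≤ (∑ g, (iterConv μ (2 ^ k - 1) g) ^ 2) -
                  ((Fintype.card (Matrix.SpecialLinearGroup (Fin 2) (ZMod p)) : ℝ))⁻¹ ∧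
              (∑ g, (iterConv μ (2 ^ k - 1) g) ^ 2) -
                  ((Fintype.card (Matrix.SpecialLinearGroup (Fin 2) (ZMod p)) : ℝ))⁻¹ ≤
                C ^ k * K ^ (-(c * k)) := by
  refine ⟨1 / 50000, 8, by norm_num, by norm_num, by norm_num,
    fun p _ hp K hK μ hnonneg hsum hsymm hcoset _ k _ _ ↦ ?_⟩
  exact stmt18_general (mod_cast natCast_zmod_ne_zero two_pos (by lia))
    (mod_cast natCast_zmod_ne_zero three_pos (by lia)) (by linarith)
    ⟨hnonneg, hsum, fun g ↦ (hsymm g).symm⟩ hcoset k
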